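/- arXiv:1212.0896 — 3 statements merged into one kernel-verified Lean document; each statement's English description precedes it below -/
import Mathlib

section
/- Let A be a basic finite-dimensional algebra over an algebraically closed field k. The following are equivalent: (1) there exist a finite-dimensional hereditary k-algebra H (one in which every submodule of a projective left H-module is projective) and a surjective k-algebra homomorphism H → A; (2) there is an ordering e_1, …, e_n of a complete set of pairwise orthogonal primitive idempotents of A such that the left regular module A belongs to F(Δ) and every standard module Δ_i is a simple module; (3) there is such an ordering for which the left regular module A belongs to F(Δ) and every finitely generated left A-module belongs to F(Δ). -/
/-!
All three conditions are compared with a fourth: some ordering `f_1, …, f_m` of a complete set of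
orthogonal primitive idempotents makes `A` directed (`f_j A f_i = 0` for `j < i`) with
`f_i A f_i = k f_i`. Being basic over an algebraically closed field enters only through the fact
that elements of `A` act on simple modules as scalars (`scalarOnSimples_of_basic`).

*Directedness and simple standard modules.* In a directed algebra with trivial corners, `A f_i` is
spanned by `f_i` modulo the trace of the later projectives, so `Δ_i` is simple
(`std_simple_of_directed`). Conversely, if every `Δ_i` is simple, hence one-dimensional, downward
induction on `i` gives directedness and trivial corners (`directed_of_std_simple`).

*Simple standard modules and filtrations.* If the standard modules are simple they exhaust the
simple modules, and a composition series is a standard filtration (`hasStdFiltration_of_simple`).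
Conversely, if all finitely generated modules are filtered, each simple module is a standard
module; the one on which `f_i` acts nontrivially can only be `Δ_i` (`std_simple_of_filtration`).

*Quotients of hereditary algebras.* Over a hereditary algebra `H` nonzero maps between
indecomposable projectives are injective. Order the primitive idempotents `e` of `H` by decreasing
dimension of `He`. A map against the order is then an isomorphism; its image in `A` must vanish,
because orthogonal idempotents of `A` never act nontrivially on the same simple module. This makes
the images in `A` directed, with trivial corners (`directed_of_hereditary_quotient`).

*Hereditary covers.* Given a directed algebra with trivial corners, a hereditary algebra mapping
onto it is built by adjoining the idempotents one at a time, the last one first. Each step is a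
one-point extension `[[H, H^d], [0, k]]` by a free module (`HereditaryCover.add`). Such an extension
is again hereditary (`OnePtExt.hereditary`): every quotient of a projective module is an extension
of a sum of copies of the new simple module, which has projective dimension at most one, by an
`H`-module, and Schanuel's lemma handles the two layers in turn.
-/

set_option linter.unusedVariables false
set_option maxHeartbeats 1000000

noncomputable section

/-! ### The corner ring `eAe` of a ring `A` at an idempotent `e` -/

variable {A : Type} [Ring A]

/-- The corner ring `eAe`, realized as `{x : A | e * x = x ∧ x * e = x}`. -/
def Corner (e : A) (_he : e * e = e) : Type := {x : A // e * x = x ∧ x * e = x}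

namespace Corner

variable {e : A} {he : e * e = e}

instance : Zero (Corner e he) := ⟨⟨0, by simp, by simp⟩⟩
instance : Add (Corner e he) :=
  ⟨fun x y => ⟨x.1 + y.1, by rw [mul_add, x.2.1, y.2.1], by rw [add_mul, x.2.2, y.2.2]⟩⟩
instance : Neg (Corner e he) :=
  ⟨fun x => ⟨-x.1, by rw [mul_neg, x.2.1], by rw [neg_mul, x.2.2]⟩⟩
instance : Mul (Corner e he) :=
  ⟨fun x y => ⟨x.1 * y.1, by rw [← mul_assoc, x.2.1], by rw [mul_assoc, y.2.2]⟩⟩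
instance : One (Corner e he) := ⟨⟨e, he, he⟩⟩

instance : AddCommGroup (Corner e he) where
  add_assoc a b c := Subtype.ext (add_assoc _ _ _)
  zero_add a := Subtype.ext (zero_add _)
  add_zero a := Subtype.ext (add_zero _)
  add_comm a b := Subtype.ext (add_comm _ _)
  neg_add_cancel a := Subtype.ext (neg_add_cancel _)
  nsmul := nsmulRec
  zsmul := zsmulRec

instance instRing : Ring (Corner e he) :=
  { (inferInstance : AddCommGroup (Corner e he)) with
    mul := (· * ·)
    one := 1
    mul_assoc := fun a b c => Subtype.ext (mul_assoc _ _ _)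
    one_mul := fun a => Subtype.ext a.2.1
    mul_one := fun a => Subtype.ext a.2.2
    left_distrib := fun a b c => Subtype.ext (left_distrib _ _ _)
    right_distrib := fun a b c => Subtype.ext (right_distrib _ _ _)
    zero_mul := fun a => Subtype.ext (zero_mul _)
    mul_zero := fun a => Subtype.ext (mul_zero _) }

section Scalars

variable {k : Type} [CommRing k] [Algebra k A]

instance : SMul k (Corner e he) :=
  ⟨fun c x => ⟨c • x.1, by rw [mul_smul_comm, x.2.1], by rw [smul_mul_assoc, x.2.2]⟩⟩

instance instModulek : Module k (Corner e he) where
  one_smul x := Subtype.ext (one_smul k x.1)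
  mul_smul c d x := Subtype.ext (mul_smul c d x.1)
  smul_zero c := Subtype.ext (smul_zero c)
  smul_add c x y := Subtype.ext (smul_add c x.1 y.1)
  add_smul c d x := Subtype.ext (add_smul c d x.1)
  zero_smul x := Subtype.ext (zero_smul k x.1)

instance instAlgebrak : Algebra k (Corner e he) :=
  Algebra.ofModule (fun c x y => Subtype.ext (smul_mul_assoc c x.1 y.1))
    (fun c x y => Subtype.ext (mul_smul_comm c x.1 y.1))

end Scalars

end Corner

/-- For a left `A`-module `M`, the subset `eM = {m | e • m = m}`, as a module over the
corner ring `eAe`. -/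
def CornerMod (e : A) (_he : e * e = e) (M : Type) [AddCommGroup M] [Module A M] : Type :=
  {m : M // e • m = m}

namespace CornerMod

variable {e : A} {he : e * e = e} {M : Type} [AddCommGroup M] [Module A M]

instance : Zero (CornerMod e he M) := ⟨⟨0, by simp⟩⟩
instance : Add (CornerMod e he M) :=
  ⟨fun x y => ⟨x.1 + y.1, by rw [smul_add, x.2, y.2]⟩⟩
instance : Neg (CornerMod e he M) := ⟨fun x => ⟨-x.1, by rw [smul_neg, x.2]⟩⟩

instance : AddCommGroup (CornerMod e he M) where
  add_assoc a b c := Subtype.ext (add_assoc _ _ _)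
  zero_add a := Subtype.ext (zero_add _)
  add_zero a := Subtype.ext (add_zero _)
  add_comm a b := Subtype.ext (add_comm _ _)
  neg_add_cancel a := Subtype.ext (neg_add_cancel _)
  nsmul := nsmulRec
  zsmul := zsmulRec

instance : SMul (Corner e he) (CornerMod e he M) :=
  ⟨fun c m => ⟨c.1 • m.1, by rw [smul_smul, c.2.1]⟩⟩

instance instModule : Module (Corner e he) (CornerMod e he M) where
  one_smul m := Subtype.ext m.2
  mul_smul x y m := Subtype.ext (mul_smul x.1 y.1 m.1)
  smul_zero x := Subtype.ext (smul_zero x.1)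
  smul_add x m m' := Subtype.ext (smul_add x.1 m.1 m'.1)
  add_smul x y m := Subtype.ext (add_smul x.1 y.1 m.1)
  zero_smul m := Subtype.ext (zero_smul A m.1)

end CornerMod

/-- The space `eAf = {x : A | e * x = x ∧ x * f = x}`, a left `eAe`-module and a right
`fAf`-module. -/
def Sandwich (e f : A) : Type := {x : A // e * x = x ∧ x * f = x}

namespace Sandwich

variable {e f : A} {he : e * e = e} {hf : f * f = f}

instance : Zero (Sandwich e f) := ⟨⟨0, by simp, by simp⟩⟩
instance : Add (Sandwich e f) :=
  ⟨fun x y => ⟨x.1 + y.1, by rw [mul_add, x.2.1, y.2.1], by rw [add_mul, x.2.2, y.2.2]⟩⟩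
instance : Neg (Sandwich e f) :=
  ⟨fun x => ⟨-x.1, by rw [mul_neg, x.2.1], by rw [neg_mul, x.2.2]⟩⟩

instance : AddCommGroup (Sandwich e f) where
  add_assoc a b c := Subtype.ext (add_assoc _ _ _)
  zero_add a := Subtype.ext (zero_add _)
  add_zero a := Subtype.ext (add_zero _)
  add_comm a b := Subtype.ext (add_comm _ _)
  neg_add_cancel a := Subtype.ext (neg_add_cancel _)
  nsmul := nsmulRec
  zsmul := zsmulRec

/-- Left action of the corner ring `eAe` on `eAf`. -/
instance : SMul (Corner e he) (Sandwich e f) :=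
  ⟨fun c x => ⟨c.1 * x.1, by rw [← mul_assoc, c.2.1], by rw [mul_assoc, x.2.2]⟩⟩

instance instModuleLeft : Module (Corner e he) (Sandwich e f) where
  one_smul x := Subtype.ext x.2.1
  mul_smul c d x := Subtype.ext (mul_assoc _ _ _)
  smul_zero c := Subtype.ext (mul_zero _)
  smul_add c x y := Subtype.ext (mul_add _ _ _)
  add_smul c d x := Subtype.ext (add_mul _ _ _)
  zero_smul x := Subtype.ext (zero_mul _)

/-- Right action of the corner ring `fAf` on `eAf`, as a left action of the opposite ring. -/
instance : SMul (Corner f hf)ᵐᵒᵖ (Sandwich e f) :=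
  ⟨fun c x => ⟨x.1 * c.unop.1, by rw [← mul_assoc, x.2.1], by rw [mul_assoc, c.unop.2.2]⟩⟩

instance instModuleRight : Module (Corner f hf)ᵐᵒᵖ (Sandwich e f) where
  one_smul x := Subtype.ext x.2.2
  mul_smul c d x := Subtype.ext (mul_assoc _ _ _).symm
  smul_zero c := Subtype.ext (zero_mul _)
  smul_add c x y := Subtype.ext (add_mul _ _ _)
  add_smul c d x := Subtype.ext (mul_add _ _ _)
  zero_smul x := Subtype.ext (mul_zero _)

end Sandwich

/-- The element `e * a * e` of the corner ring `eAe`. -/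
def cornEl {e : A} (he : e * e = e) (a : A) : Corner e he :=
  ⟨e * a * e, by conv_lhs => rw [← mul_assoc, ← mul_assoc, he], by rw [mul_assoc, he]⟩
def LIdeal (e : A) : Type := {x : A // x * e = x}
namespace LIdeal
variable {e : A}
instance : Zero (LIdeal e) := ⟨⟨0, by simp⟩⟩
instance : Add (LIdeal e) := ⟨fun x y => ⟨x.1 + y.1, by rw [add_mul, x.2, y.2]⟩⟩
instance : Neg (LIdeal e) := ⟨fun x => ⟨-x.1, by rw [neg_mul, x.2]⟩⟩
instance : AddCommGroup (LIdeal e) where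
  add_assoc a b c := Subtype.ext (add_assoc _ _ _)
  zero_add a := Subtype.ext (zero_add _)
  add_zero a := Subtype.ext (add_zero _)
  add_comm a b := Subtype.ext (add_comm _ _)
  neg_add_cancel a := Subtype.ext (neg_add_cancel _)
  nsmul := nsmulRec
  zsmul := zsmulRec
instance : SMul A (LIdeal e) := ⟨fun a x => ⟨a * x.1, by rw [mul_assoc, x.2]⟩⟩
instance instModuleA : Module A (LIdeal e) where
  one_smul x := Subtype.ext (one_mul _)
  mul_smul a b x := Subtype.ext (mul_assoc _ _ _)
  smul_zero a := Subtype.ext (mul_zero _)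
  smul_add a x y := Subtype.ext (mul_add _ _ _)
  add_smul a b x := Subtype.ext (add_mul _ _ _)
  zero_smul x := Subtype.ext (zero_mul _)
section Scalars
variable {k : Type} [CommRing k] [Algebra k A]
instance : SMul k (LIdeal e) := ⟨fun c x => ⟨c • x.1, by rw [smul_mul_assoc, x.2]⟩⟩
instance instModulek : Module k (LIdeal e) where
  one_smul x := Subtype.ext (one_smul k x.1)
  mul_smul c d x := Subtype.ext (mul_smul c d x.1)
  smul_zero c := Subtype.ext (smul_zero c)
  smul_add c x y := Subtype.ext (smul_add c x.1 y.1)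
  add_smul c d x := Subtype.ext (add_smul c d x.1)
  zero_smul x := Subtype.ext (zero_smul k x.1)
end Scalars
end LIdeal

def RIdeal (f : A) : Type := {x : A // f * x = x}
namespace RIdeal
variable {f : A}
instance : Zero (RIdeal f) := ⟨⟨0, by simp⟩⟩
instance : Add (RIdeal f) := ⟨fun x y => ⟨x.1 + y.1, by rw [mul_add, x.2, y.2]⟩⟩
instance : Neg (RIdeal f) := ⟨fun x => ⟨-x.1, by rw [mul_neg, x.2]⟩⟩
instance : AddCommGroup (RIdeal f) where
  add_assoc a b c := Subtype.ext (add_assoc _ _ _)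
  zero_add a := Subtype.ext (zero_add _)
  add_zero a := Subtype.ext (add_zero _)
  add_comm a b := Subtype.ext (add_comm _ _)
  neg_add_cancel a := Subtype.ext (neg_add_cancel _)
  nsmul := nsmulRec
  zsmul := zsmulRec
section Scalars
variable {k : Type} [CommRing k] [Algebra k A]
instance : SMul k (RIdeal f) := ⟨fun c x => ⟨c • x.1, by rw [mul_smul_comm, x.2]⟩⟩
instance instModulek : Module k (RIdeal f) where
  one_smul x := Subtype.ext (one_smul k x.1)
  mul_smul c d x := Subtype.ext (mul_smul c d x.1)
  smul_zero c := Subtype.ext (smul_zero c)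
  smul_add c x y := Subtype.ext (smul_add c x.1 y.1)
  add_smul c d x := Subtype.ext (add_smul c d x.1)
  zero_smul x := Subtype.ext (zero_smul k x.1)
end Scalars
end RIdeal

section Duals
variable (k : Type) [CommRing k] {A : Type} [Ring A] [Algebra k A]

/-- Right multiplication by `a : A` on the right ideal `fA`, as a `k`-linear map. -/
def rmulR {f : A} (a : A) : RIdeal (A := A) f →ₗ[k] RIdeal (A := A) f where
  toFun m := ⟨m.1 * a, by rw [← mul_assoc, m.2]⟩
  map_add' x y := Subtype.ext (add_mul _ _ _)
  map_smul' c x := Subtype.ext (smul_mul_assoc _ _ _)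

/-- Left multiplication by `b : A` on the left ideal `Ae`, as a `k`-linear map. -/
def lmulL {e : A} (b : A) : LIdeal (A := A) e →ₗ[k] LIdeal (A := A) e where
  toFun m := ⟨b * m.1, by rw [mul_assoc, m.2]⟩
  map_add' x y := Subtype.ext (mul_add _ _ _)
  map_smul' c x := Subtype.ext (mul_smul_comm _ _ _)

variable {f e : A}

/-- `D(fA) = Hom_k(fA, k)` is a left `A`-module via `(a • φ) m = φ (m * a)`. -/
instance : SMul A (RIdeal (A := A) f →ₗ[k] k) := ⟨fun a φ => φ.comp (rmulR k a)⟩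

instance DualRIdeal.instModuleA : Module A (RIdeal (A := A) f →ₗ[k] k) where
  one_smul φ := LinearMap.ext fun m => congrArg φ (Subtype.ext (mul_one m.1))
  mul_smul a b φ := LinearMap.ext fun m => congrArg φ (Subtype.ext (mul_assoc m.1 a b).symm)
  smul_zero a := LinearMap.ext fun m => rfl
  smul_add a φ ψ := LinearMap.ext fun m => rfl
  add_smul a b φ := LinearMap.ext fun m => by
    have h : rmulR k (f := f) (a + b) m = rmulR k a m + rmulR k b m :=
      Subtype.ext (mul_add m.1 a b)
    show φ (rmulR k (a + b) m) = φ (rmulR k a m) + φ (rmulR k b m)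
    rw [h, map_add]
  zero_smul φ := LinearMap.ext fun m => by
    have h : rmulR k (f := f) (0 : A) m = 0 := Subtype.ext (mul_zero m.1)
    show φ (rmulR k (0 : A) m) = 0
    rw [h, map_zero]

/-- `D(Ae) = Hom_k(Ae, k)` is a right `A`-module, i.e. a left `Aᵐᵒᵖ`-module, via
`(φ • a) m = φ (a * m)`. -/
instance : SMul Aᵐᵒᵖ (LIdeal (A := A) e →ₗ[k] k) := ⟨fun a φ => φ.comp (lmulL k a.unop)⟩

instance DualLIdeal.instModuleAop : Module Aᵐᵒᵖ (LIdeal (A := A) e →ₗ[k] k) where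
  one_smul φ := LinearMap.ext fun m => congrArg φ (Subtype.ext (one_mul m.1))
  mul_smul a b φ := LinearMap.ext fun m =>
    congrArg φ (Subtype.ext (mul_assoc b.unop a.unop m.1))
  smul_zero a := LinearMap.ext fun m => rfl
  smul_add a φ ψ := LinearMap.ext fun m => rfl
  add_smul a b φ := LinearMap.ext fun m => by
    have h : lmulL k (e := e) ((a + b).unop) m = lmulL k a.unop m + lmulL k b.unop m :=
      Subtype.ext (add_mul a.unop b.unop m.1)
    show φ (lmulL k ((a + b).unop) m) = φ (lmulL k a.unop m) + φ (lmulL k b.unop m)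
    rw [h, map_add]
  zero_smul φ := LinearMap.ext fun m => by
    have h : lmulL k (e := e) ((0 : Aᵐᵒᵖ).unop) m = 0 := Subtype.ext (zero_mul m.1)
    show φ (lmulL k ((0 : Aᵐᵒᵖ).unop) m) = 0
    rw [h, map_zero]

/-- Left multiplication by `a : A` on `A`, as a map of right `A`-modules. -/
def lmulOp (a : A) : A →ₗ[Aᵐᵒᵖ] A where
  toFun x := a * x
  map_add' := mul_add a
  map_smul' b x := by
    simp only [MulOpposite.smul_eq_mul_unop, RingHom.id_apply, mul_assoc]

/-- `Hom_{Aᵒᵖ}(D(Ae), A)` is a left `A`-module via `(a • ψ) φ = a * ψ φ`. -/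
instance : SMul A ((LIdeal (A := A) e →ₗ[k] k) →ₗ[Aᵐᵒᵖ] A) :=
  ⟨fun a ψ => (lmulOp a).comp ψ⟩

instance HomDualA.instModuleA : Module A ((LIdeal (A := A) e →ₗ[k] k) →ₗ[Aᵐᵒᵖ] A) where
  one_smul ψ := LinearMap.ext fun φ => one_mul _
  mul_smul a b ψ := LinearMap.ext fun φ => mul_assoc _ _ _
  smul_zero a := LinearMap.ext fun φ => mul_zero _
  smul_add a ψ χ := LinearMap.ext fun φ => mul_add _ _ _
  add_smul a b ψ := LinearMap.ext fun φ => add_mul _ _ _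
  zero_smul ψ := LinearMap.ext fun φ => zero_mul _

end Duals
/-! ### Stratification -/

section Strat

variable (A : Type) [Ring A] {n : ℕ} (e : Fin n → A)

/-- The left ideal `Ae_i`, as a submodule of the left regular module. -/
abbrev stdIdeal (i : Fin n) : Submodule A A := Submodule.span A {e i}

/-- The left submodule `Σ_{l > i} A e_l A e_i` of `A`. -/
abbrev stdTrace (i : Fin n) : Submodule A A :=
  Submodule.span A {x : A | ∃ l : Fin n, i < l ∧ ∃ b : A, x = e l * b * e i}

/-- The standard module `Δ_i = Ae_i / (Σ_{l>i} A e_l A e_i)`. -/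
abbrev StdMod (i : Fin n) :=
  ↥(stdIdeal A e i) ⧸ (Submodule.comap (stdIdeal A e i).subtype (stdTrace A e i))

/-- The submodule `Σ_{j ≥ i} A e_j (rad A) e_i` of `A`, where `rad A` is the Jacobson
radical of `A`. -/
abbrev properTrace (i : Fin n) : Submodule A A :=
  Submodule.span A {x : A | ∃ j : Fin n, i ≤ j ∧
    ∃ r ∈ Ideal.jacobson (⊥ : Ideal A), x = e j * r * e i}

/-- The proper standard module `Δ̄_i = Ae_i / (Σ_{j ≥ i} A e_j (rad A) e_i)`. -/
abbrev PStdMod (i : Fin n) :=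
  ↥(stdIdeal A e i) ⧸ (Submodule.comap (stdIdeal A e i).subtype (properTrace A e i))

/-- `M` admits a filtration `0 = M_0 ⊆ M_1 ⊆ ⋯ ⊆ M_r = M` whose successive quotients are
standard modules; i.e. `M ∈ F(Δ)`. -/
def HasStdFiltration (M : Type) [AddCommGroup M] [Module A M] : Prop :=
  ∃ (r : ℕ) (F : Fin (r + 1) → Submodule A M), Monotone F ∧ F 0 = ⊥ ∧ F (Fin.last r) = ⊤ ∧
    ∀ t : Fin r, ∃ i : Fin n,
      Nonempty ((↥(F t.succ) ⧸ (Submodule.comap (F t.succ).subtype (F t.castSucc)))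
        ≃ₗ[A] StdMod A e i)

/-- `M` admits a filtration `0 = M_0 ⊆ M_1 ⊆ ⋯ ⊆ M_r = M` whose successive quotients are
direct summands of standard modules. -/
def HasStdSummandFiltration (M : Type) [AddCommGroup M] [Module A M] : Prop :=
  ∃ (r : ℕ) (F : Fin (r + 1) → Submodule A M), Monotone F ∧ F 0 = ⊥ ∧ F (Fin.last r) = ⊤ ∧
    ∀ t : Fin r, ∃ (i : Fin n) (p q : Submodule A (StdMod A e i)), IsCompl p q ∧
      Nonempty ((↥(F t.succ) ⧸ (Submodule.comap (F t.succ).subtype (F t.castSucc)))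
        ≃ₗ[A] ↥p)

/-- The algebra `A` is directed with respect to the index order of the idempotents `e_i`:
`e_j A e_i = 0` whenever `j < i`. -/
def IsDirectedAlgebra : Prop := ∀ i j : Fin n, j < i → ∀ a : A, e j * a * e i = 0

end Strat

/-- `ProjDimLE A d M` : the left `A`-module `M` has projective dimension at most `d`,
i.e. admits a projective resolution of length at most `d`. -/
def ProjDimLE (A : Type) [Ring A] : ℕ → (M : Type) → [AddCommGroup M] → [Module A M] → Prop
  | 0, M, _, _ => Module.Projective A M
  | (d + 1), M, _, _ => ∃ (P : Type) (_ : AddCommGroup P) (_ : Module A P)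
      (f : P →ₗ[A] M), Module.Projective A P ∧ Function.Surjective f ∧
        ProjDimLE A d ↥(LinearMap.ker f)

/-- A nonzero module which is not the internal direct sum of two nonzero submodules. -/
def IsIndecModule (A : Type) [Ring A] (M : Type) [AddCommGroup M] [Module A M] : Prop :=
  Nontrivial M ∧ ∀ p q : Submodule A M, IsCompl p q → p = ⊥ ∨ q = ⊥

end

/-! ### Left ideals generated by an idempotent -/

/-- For an idempotent `f`, the left ideal `Af` consists of the elements fixed by right
multiplication by `f`. -/
theorem mem_span_idem {A : Type} [Ring A] {f : A} (hf : f * f = f) (z : A) :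
    z ∈ Submodule.span A {f} ↔ z * f = z := by
  rw [Submodule.mem_span_singleton]
  constructor
  · rintro ⟨a, rfl⟩
    simp [mul_assoc, hf]
  · intro h
    exact ⟨z, h⟩

theorem exists_idem_smul_ne {A : Type} [Ring A] {m : ℕ} {f : Fin m → A} (hsum : ∑ i, f i = 1)
    {M : Type} [AddCommGroup M] [Module A M] {s : M} (hs : s ≠ 0) : ∃ i, f i • s ≠ 0 := by
  by_contra! h
  apply hs
  rw [← one_smul A s, ← hsum, Finset.sum_smul]
  exact Finset.sum_eq_zero fun i _ => h i

/-! ### Filtrations when all standard modules are simple -/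

/-- If all standard modules are simple then they exhaust the simple modules: for a simple `S`,
take `i` maximal with `f i • S ≠ 0`; then the trace of the later projectives dies in `S`, so `S` is
a quotient of `Δ_i`. -/
theorem simple_equiv_std {A : Type} [Ring A] {m : ℕ} {f : Fin m → A}
    (hid : ∀ i, f i * f i = f i) (hsum : ∑ i, f i = 1)
    (hsimp : ∀ i, IsSimpleModule A (StdMod A f i))
    (S : Type) [AddCommGroup S] [Module A S] [IsSimpleModule A S] :
    ∃ i, Nonempty (S ≃ₗ[A] StdMod A f i) := by
  classical
  have hS := IsSimpleModule.nontrivial A S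
  obtain ⟨s₀, hs₀⟩ := exists_ne (0 : S)
  obtain ⟨i₀, hi₀⟩ := exists_idem_smul_ne hsum hs₀
  have hne : (Finset.univ.filter fun i => ∃ s : S, f i • s ≠ 0).Nonempty :=
    ⟨i₀, by simp only [Finset.mem_filter, Finset.mem_univ, true_and]; exact ⟨s₀, hi₀⟩⟩
  obtain ⟨i, hi, hmax⟩ := Finset.exists_max_image _ id hne
  simp only [Finset.mem_filter, Finset.mem_univ, true_and, id] at hi hmax
  have hkill : ∀ l, i < l → ∀ s : S, f l • s = 0 := by
    intro l hl s
    by_contra h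
    exact absurd (hmax l ⟨s, h⟩) (not_le.mpr hl)
  obtain ⟨s, hs⟩ := hi
  let g : A →ₗ[A] S := LinearMap.toSpanSingleton A S (f i • s)
  have htr : stdTrace A f i ≤ LinearMap.ker g := by
    rw [Submodule.span_le]
    rintro x ⟨l, hl, b, rfl⟩
    simp [g, mul_smul, hkill l hl]
  let g' : ↥(stdIdeal A f i) →ₗ[A] S := g.comp (stdIdeal A f i).subtype
  have hle : Submodule.comap (stdIdeal A f i).subtype (stdTrace A f i) ≤ LinearMap.ker g' := by
    intro x hx
    exact htr hx
  let G : StdMod A f i →ₗ[A] S := Submodule.liftQ _ g' hle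
  have hG : G ≠ 0 := by
    intro h0
    have h1 : G (Submodule.Quotient.mk ⟨f i, Submodule.mem_span_singleton_self _⟩) = 0 := by
      rw [h0]; rfl
    have h2 : G (Submodule.Quotient.mk ⟨f i, Submodule.mem_span_singleton_self _⟩) =
        f i • f i • s := rfl
    rw [h2, smul_smul, hid] at h1
    exact hs h1
  have := hsimp i
  exact ⟨i, ⟨(LinearEquiv.ofBijective G (LinearMap.bijective_of_ne_zero hG)).symm⟩⟩

/-- A composition series is a standard filtration when all standard modules are simple. -/
theorem hasStdFiltration_of_simple {A : Type} [Ring A] [IsArtinianRing A] {m : ℕ} {f : Fin m → A}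
    (hid : ∀ i, f i * f i = f i) (hsum : ∑ i, f i = 1)
    (hsimp : ∀ i, IsSimpleModule A (StdMod A f i))
    (M : Type) [AddCommGroup M] [Module A M] [Module.Finite A M] :
    HasStdFiltration A f M := by
  obtain ⟨s, h0, h1⟩ := exists_compositionSeries_of_isNoetherian_isArtinian A M
  refine ⟨s.length, s.toFun, s.strictMono.monotone, h0, h1, fun t => ?_⟩
  have hc : s.toFun t.castSucc ⋖ s.toFun t.succ := s.step t
  have := (covBy_iff_quot_is_simple hc.le).mp hc
  exact simple_equiv_std hid hsum hsimp _

/-- A simple module in `F(Δ)` is itself a standard module. -/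
theorem simple_equiv_of_filtration {A : Type} [Ring A] {m : ℕ} {f : Fin m → A}
    (S : Type) [AddCommGroup S] [Module A S] [IsSimpleModule A S]
    (h : HasStdFiltration A f S) : ∃ i, Nonempty (S ≃ₗ[A] StdMod A f i) := by
  obtain ⟨r, F, hmono, h0, h1, hq⟩ := h
  -- at the first step where the chain leaves `⊥` it reaches `⊤`
  have key : ∃ t : Fin r, F t.castSucc = ⊥ ∧ F t.succ = ⊤ := by
    by_contra! hcon
    have hall : ∀ t : Fin (r + 1), F t = ⊥ := by
      intro t
      induction t using Fin.induction with
      | zero => exact h0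
      | succ t ih => exact (eq_bot_or_eq_top (F t.succ)).resolve_right (hcon t ih)
    have := hall (Fin.last r)
    rw [h1] at this
    exact top_ne_bot this
  obtain ⟨t, hb, ht⟩ := key
  obtain ⟨i, ⟨E⟩⟩ := hq t
  have hbot : Submodule.comap (F t.succ).subtype (F t.castSucc) = ⊥ := by
    rw [hb, Submodule.comap_bot, Submodule.ker_subtype]
  exact ⟨i, ⟨((Submodule.quotEquivOfEqBot _ hbot).trans (LinearEquiv.ofTop _ ht)).symm.trans E⟩⟩

/-! ### Simple modules over a basic algebra -/

/-- Fitting's lemma for the endomorphism of an indecomposable `Af` given by right multiplication: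
an element of `fAf` is nilpotent or invertible in `fAf`. -/
theorem nilpotent_or_inverse {A : Type} [Ring A] [IsArtinianRing A] {f x : A} (hf : f * f = f)
    (hind : IsIndecModule A ↥(Submodule.span A {f})) (hx1 : f * x = x) (hx2 : x * f = x) :
    (∃ n, f * x ^ n = 0) ∨ ∃ y, f * y = y ∧ y * f = y ∧ y * x = f ∧ x * y = f := by
  let g : Module.End A ↥(Submodule.span A {f}) :=
    (LinearMap.toSpanSingleton A A x).restrict (p := Submodule.span A {f})
      (q := Submodule.span A {f}) (by
        intro z hz
        rw [mem_span_idem hf] at hz ⊢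
        simp [mul_assoc, hx2])
  have hg : ∀ z, (g z : A) = z * x := fun z => rfl
  have hgn : ∀ n z, ((g ^ n) z : A) = z * x ^ n := by
    intro n
    induction n with
    | zero => intro z; simp
    | succ n ih => intro z; rw [pow_succ, Module.End.mul_apply, ih, hg, mul_assoc, pow_succ']
  obtain ⟨n, hn⟩ := Filter.eventually_atTop.mp
    (LinearMap.eventually_isCompl_ker_pow_range_pow g)
  have hc := hn (n + 1) (by omega)
  rcases hind.2 _ _ hc with h | h
  · right
    have hinj : Function.Injective (g ^ (n + 1)) := LinearMap.ker_eq_bot.mp h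
    have htop : LinearMap.range (g ^ (n + 1)) = ⊤ := by
      have := hc.sup_eq_top
      rwa [h, bot_sup_eq] at this
    have hginj : Function.Injective g := by
      intro a b hab
      apply hinj
      rw [pow_succ, Module.End.mul_apply, Module.End.mul_apply, hab]
    obtain ⟨z, hz⟩ := LinearMap.range_eq_top.mp htop ⟨f, Submodule.mem_span_singleton_self _⟩
    have hz' := congrArg Subtype.val hz
    rw [hgn] at hz'
    have hzf : (z : A) * f = z := (mem_span_idem hf _).mp z.2
    have hxn : x ^ n * x = x ^ (n + 1) := (pow_succ x n).symm
    -- `y = f z xⁿ f` is a left inverse of `x`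
    refine ⟨f * z * x ^ n * f, by simp [← mul_assoc, hf], by rw [mul_assoc, hf], ?_, ?_⟩
    · rw [mul_assoc, hx1, mul_assoc, hxn, mul_assoc, hz', hf]
    · have hl : f * z * x ^ n * f * x = f := by
        rw [mul_assoc, hx1, mul_assoc, hxn, mul_assoc, hz', hf]
      have hmem : x * (f * z * x ^ n * f) ∈ Submodule.span A {f} := by
        rw [mem_span_idem hf, ← mul_assoc, mul_assoc, hf]
      have := @hginj ⟨_, hmem⟩ ⟨f, Submodule.mem_span_singleton_self _⟩ (by
        apply Subtype.ext
        rw [hg, hg]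
        rw [mul_assoc, hl, hx2, hx1])
      exact congrArg Subtype.val this
  · left
    refine ⟨n + 1, ?_⟩
    have h0 : g ^ (n + 1) = 0 := LinearMap.range_eq_bot.mp h
    have h1 := hgn (n + 1) ⟨f, Submodule.mem_span_singleton_self _⟩
    rw [h0] at h1
    exact h1.symm

/-- An element of `fAf` with a fixed vector `s = x • s ≠ 0` in some module is not nilpotent. -/
theorem not_nilpotent_of_fixed {A : Type} [Ring A] {f x : A} {M : Type} [AddCommGroup M]
    [Module A M] {s : M} (hs : s ≠ 0) (hfs : f • s = s) (hxs : x • s = s) :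
    ¬ ∃ n, f * x ^ n = 0 := by
  rintro ⟨n, hn⟩
  have h1 : ∀ n : ℕ, x ^ n • s = s := by
    intro n
    induction n with
    | zero => simp
    | succ n ih => rw [pow_succ, mul_smul, hxs, ih]
  apply hs
  rw [← hfs, ← h1 n, smul_smul, hn, zero_smul]

/-- Each element of `A` acts on each simple module as a scalar of `k`; equivalently, the simple
modules are one-dimensional. For finite-dimensional algebras over algebraically closed fields this
is equivalent to being basic. -/
def ScalarOnSimples (k A : Type) [Field k] [Ring A] [Algebra k A] : Prop :=
  ∀ (S : Type) [AddCommGroup S] [Module A S], IsSimpleModule A S →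
    ∀ a : A, ∃ c : k, ∀ s : S, a • s = algebraMap k A c • s

/-- Over a basic algebra, distinct idempotents of the basic set cannot both act nontrivially on a
simple module. -/
theorem basic_unique_idem {A : Type} [Ring A] [IsArtinianRing A] {m : ℕ} {f : Fin m → A}
    (hid : ∀ i, f i * f i = f i)
    (hind : ∀ i, IsIndecModule A ↥(stdIdeal A f i))
    (hiso : ∀ i j, i ≠ j → IsEmpty (↥(stdIdeal A f i) ≃ₗ[A] ↥(stdIdeal A f j)))
    (S : Type) [AddCommGroup S] [Module A S] [IsSimpleModule A S] {i j : Fin m} (hij : i ≠ j)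
    {s t : S} (hs : s ≠ 0) (ht : t ≠ 0) (hfs : f i • s = s) (hft : f j • t = t) : False := by
  obtain ⟨a', ha'⟩ := IsSimpleModule.toSpanSingleton_surjective A hs t
  obtain ⟨b', hb'⟩ := IsSimpleModule.toSpanSingleton_surjective A ht s
  simp only [LinearMap.toSpanSingleton_apply] at ha' hb'
  set a := f j * a' * f i with ha
  set b := f i * b' * f j with hb
  have has : a • s = t := by rw [ha, mul_smul, mul_smul, hfs, ha', hft]
  have hbt : b • t = s := by rw [hb, mul_smul, mul_smul, hft, hb', hfs]
  have ha1 : f j * a = a := by rw [ha, ← mul_assoc, ← mul_assoc, hid]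
  have ha2 : a * f i = a := by rw [ha, mul_assoc, hid]
  have hb1 : f i * b = b := by rw [hb, ← mul_assoc, ← mul_assoc, hid]
  have hb2 : b * f j = b := by rw [hb, mul_assoc, hid]
  clear_value a b
  obtain ⟨y, hy1, hy2, hy3, hy4⟩ := (nilpotent_or_inverse (x := b * a) (hid i) (hind i)
    (by rw [← mul_assoc, hb1]) (by rw [mul_assoc, ha2])).resolve_left
    (not_nilpotent_of_fixed hs hfs (by rw [mul_smul, has, hbt]))
  obtain ⟨y', -, -, hy3', -⟩ := (nilpotent_or_inverse (x := a * b) (hid j) (hind j)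
    (by rw [← mul_assoc, ha1]) (by rw [mul_assoc, hb2])).resolve_left
    (not_nilpotent_of_fixed ht hft (by rw [mul_smul, hbt, has]))
  have h1 : b * (a * y) = f i := by rw [← mul_assoc, hy4]
  have h2 : a * y * b = f j := by
    have e1 : y' * (a * b) * (a * y * b) = y' * (a * b) := by
      rw [mul_assoc, mul_assoc a b, ← mul_assoc b, h1, hb1]
    rw [hy3'] at e1
    have e2 : f j * (a * y * b) = a * y * b := by rw [← mul_assoc, ← mul_assoc, ha1]
    rw [← e2, e1]
  refine (hiso i j hij).false (LinearEquiv.ofLinearMap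
    ((LinearMap.toSpanSingleton A A b).restrict (p := stdIdeal A f i) (q := stdIdeal A f j) ?_)
    ((LinearMap.toSpanSingleton A A (a * y)).restrict (p := stdIdeal A f j)
      (q := stdIdeal A f i) ?_) ?_ ?_)
  · intro z hz
    rw [mem_span_idem (hid _)]
    simp [mul_assoc, hb2]
  · intro z hz
    rw [mem_span_idem (hid _)]
    simp [mul_assoc, hy2]
  · ext z
    have hz : (z : A) * f j = z := (mem_span_idem (hid j) _).mp z.2
    change (z : A) * (a * y) * b = z
    rw [mul_assoc, h2, hz]
  · ext z
    have hz : (z : A) * f i = z := (mem_span_idem (hid i) _).mp z.2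
    change (z : A) * b * (a * y) = z
    rw [mul_assoc, h1, hz]

/-- Over an algebraically closed field an element of `fAf`, `f ≠ 0`, has an eigenvalue: some
`x - c f` is not invertible in `fAf`. -/
theorem exists_eigenvalue_corner {k A : Type} [Field k] [IsAlgClosed k] [Ring A] [Algebra k A]
    [FiniteDimensional k A] {f x : A} (hf : f * f = f) (hf0 : f ≠ 0) (hx2 : x * f = x) :
    ∃ (c : k) (z : A), z ≠ 0 ∧ z * f = z ∧ z * (x - c • f) = 0 := by
  let V : Submodule k A := LinearMap.range (LinearMap.mulRight k f)
  have hV : ∀ z ∈ V, z * f = z := by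
    rintro _ ⟨w, rfl⟩
    simp [mul_assoc, hf]
  have hV' : ∀ z, z * f = z → z ∈ V := fun z hz => ⟨z, hz⟩
  let g : Module.End k V := (LinearMap.mulRight k x).restrict (p := V) (q := V) (by
    intro z hz
    apply hV'
    simp [mul_assoc, hx2])
  have : Nontrivial V := ⟨⟨⟨f, hV' f hf⟩, 0, fun h => hf0 (congrArg Subtype.val h)⟩⟩
  obtain ⟨c, hc⟩ := Module.End.exists_eigenvalue g
  obtain ⟨v, hv⟩ := hc.exists_hasEigenvector
  refine ⟨c, v, fun h => hv.2 (Subtype.ext h), hV _ v.2, ?_⟩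
  have h1 : (v : A) * x = c • (v : A) := congrArg Subtype.val hv.apply_eq_smul
  rw [mul_sub, h1, mul_smul_comm, hV _ v.2, sub_self]

/-- The simple modules of a basic algebra over an algebraically closed field are
one-dimensional. -/
theorem scalarOnSimples_of_basic {k A : Type} [Field k] [IsAlgClosed k] [Ring A] [Algebra k A]
    [FiniteDimensional k A] [IsArtinianRing A] {m : ℕ} {f : Fin m → A}
    (hid : ∀ i, f i * f i = f i) (hsum : ∑ i, f i = 1)
    (hind : ∀ i, IsIndecModule A ↥(stdIdeal A f i))
    (hiso : ∀ i j, i ≠ j → IsEmpty (↥(stdIdeal A f i) ≃ₗ[A] ↥(stdIdeal A f j))) :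
    ScalarOnSimples k A := by
  intro S _ _ hS a
  have hnt := IsSimpleModule.nontrivial A S
  obtain ⟨s₀, hs₀⟩ := exists_ne (0 : S)
  obtain ⟨i, hi⟩ := exists_idem_smul_ne hsum hs₀
  have hfi : f i • f i • s₀ = f i • s₀ := by rw [smul_smul, hid]
  have hother : ∀ j, j ≠ i → ∀ s : S, f j • s = 0 := by
    intro j hj s
    by_contra h
    exact basic_unique_idem hid hind hiso S hj.symm hi h hfi (by rw [smul_smul, hid])
  have hone : ∀ s : S, f i • s = s := by
    intro s
    conv_rhs => rw [← one_smul A s, ← hsum, Finset.sum_smul]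
    rw [Finset.sum_eq_single i (fun j _ hj => hother j hj s) (by simp)]
  have hfi0 : f i ≠ 0 := by
    intro h
    rw [h, zero_smul] at hi
    exact hi rfl
  obtain ⟨c, z, hz0, hzf, hz⟩ := exists_eigenvalue_corner (k := k) (x := f i * a * f i) (hid i) hfi0
    (by rw [mul_assoc, hid])
  set y := f i * a * f i - c • f i with hy
  have hy1 : f i * y = y := by
    rw [hy, mul_sub, ← mul_assoc, ← mul_assoc, hid, mul_smul_comm, hid]
  have hy2 : y * f i = y := by
    rw [hy, sub_mul, mul_assoc, hid, smul_mul_assoc, hid]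
  -- `y` is a zero divisor in the local ring `fAf`, so it kills the simple module
  have hys : ∀ s : S, y • s = 0 := by
    intro s
    by_contra hne
    have hs : s ≠ 0 := by
      rintro rfl
      simp at hne
    obtain ⟨d, hd⟩ := IsSimpleModule.toSpanSingleton_surjective A hne s
    simp only [LinearMap.toSpanSingleton_apply] at hd
    obtain ⟨w, -, -, -, hw⟩ := (nilpotent_or_inverse (x := y * d * f i) (hid i) (hind i)
      (by rw [← mul_assoc, ← mul_assoc, hy1]) (by rw [mul_assoc, hid])).resolve_left
      (not_nilpotent_of_fixed (s := y • s) hne (hone _)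
        (by rw [mul_smul, mul_smul, hone, hd]))
    apply hz0
    rw [← hzf, ← hw, ← mul_assoc, ← mul_assoc, ← mul_assoc, hz]
    simp
  refine ⟨c, fun s => ?_⟩
  have h := hys s
  rw [hy, sub_smul, sub_eq_zero, mul_smul, mul_smul, hone, hone, Algebra.smul_def, mul_smul,
    hone] at h
  exact h

/-- If all simple modules are one-dimensional, orthogonal idempotents cannot both act nontrivially
on a simple module. -/
theorem ScalarOnSimples.orthogonal {k A : Type} [Field k] [Ring A] [Algebra k A]
    (hA : ScalarOnSimples k A) {e e' : A} (h : e * e' = 0)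
    (S : Type) [AddCommGroup S] [Module A S] [hS : IsSimpleModule A S] {s : S} (hs : e • s ≠ 0)
    (t : S) : e' • t = 0 := by
  obtain ⟨c, hc⟩ := hA S hS e
  obtain ⟨d, hd⟩ := hA S hS e'
  have hc0 : c ≠ 0 := by
    rintro rfl
    apply hs
    rw [hc, map_zero, zero_smul]
  have h1 : e • e' • t = 0 := by rw [smul_smul, h, zero_smul]
  rw [hc] at h1
  have h2 := congrArg (fun x => algebraMap k A c⁻¹ • x) h1
  simpa only [smul_zero, smul_smul, ← mul_assoc, ← map_mul, inv_mul_cancel₀ hc0, map_one,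
    one_mul] using h2

/-- A nonzero idempotent acts nontrivially on some simple module, namely on a simple quotient of
`Ae`. -/
theorem exists_simple_idem {A : Type} [Ring A] {e : A} (he : e * e = e) (he0 : e ≠ 0) :
    ∃ (L : Submodule A ↥(Submodule.span A {e})) (_ : IsSimpleModule A (↥(Submodule.span A {e}) ⧸ L))
      (s : ↥(Submodule.span A {e}) ⧸ L), e • s ≠ 0 := by
  have : Nontrivial ↥(Submodule.span A {e}) :=
    ⟨⟨⟨e, Submodule.mem_span_singleton_self _⟩, 0, fun h => he0 (congrArg Subtype.val h)⟩⟩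
  obtain ⟨L, hL⟩ := IsCoatomic.exists_coatom (Submodule A ↥(Submodule.span A {e}))
  refine ⟨L, isSimpleModule_iff_isCoatom.mpr hL,
    Submodule.Quotient.mk ⟨e, Submodule.mem_span_singleton_self _⟩, ?_⟩
  intro h
  rw [← Submodule.Quotient.mk_smul, Submodule.Quotient.mk_eq_zero] at h
  apply hL.1
  rw [eq_top_iff]
  intro z _
  have hz : z = (z : A) • (e • (⟨e, Submodule.mem_span_singleton_self _⟩ :
      ↥(Submodule.span A {e}))) := by
    apply Subtype.ext
    change (z : A) = z * (e * e)
    rw [he, (mem_span_idem he _).mp z.2]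
  rw [hz]
  exact L.smul_mem _ h

/-! ### Directed algebras and simple standard modules -/

/-- `f i A f i = k f i` for all `i`: the corner rings of the idempotents are trivial. -/
def TrivialCorners (k : Type) {A : Type} [Field k] [Ring A] [Algebra k A] {m : ℕ}
    (f : Fin m → A) : Prop :=
  ∀ i a, ∃ c : k, f i * a * f i = c • f i

/-- The class of `f i` in `Δ_i`. -/
abbrev stdGen {A : Type} [Ring A] {m : ℕ} (f : Fin m → A) (i : Fin m) : StdMod A f i :=
  Submodule.Quotient.mk ⟨f i, Submodule.mem_span_singleton_self _⟩

theorem smul_stdGen_eq_zero {A : Type} [Ring A] {m : ℕ} {f : Fin m → A} {i : Fin m} {a : A} :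
    a • stdGen f i = 0 ↔ a * f i ∈ stdTrace A f i := by
  rw [stdGen, ← Submodule.Quotient.mk_smul, Submodule.Quotient.mk_eq_zero]
  rfl

theorem exists_smul_stdGen {A : Type} [Ring A] {m : ℕ} {f : Fin m → A} {i : Fin m}
    (z : StdMod A f i) : ∃ a : A, z = a • stdGen f i := by
  obtain ⟨⟨z, hz⟩, rfl⟩ := Submodule.Quotient.mk_surjective _ z
  obtain ⟨a, rfl⟩ := Submodule.mem_span_singleton.mp hz
  exact ⟨a, rfl⟩

theorem stdGen_ne_zero {A : Type} [Ring A] {m : ℕ} {f : Fin m → A} {i : Fin m}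
    [Nontrivial (StdMod A f i)] : stdGen f i ≠ 0 := by
  intro h
  obtain ⟨z, hz⟩ := exists_ne (0 : StdMod A f i)
  obtain ⟨a, rfl⟩ := exists_smul_stdGen z
  exact hz (by rw [h, smul_zero])

theorem idem_smul_stdGen {A : Type} [Ring A] {m : ℕ} {f : Fin m → A}
    (hid : ∀ i, f i * f i = f i) (i : Fin m) : f i • stdGen f i = stdGen f i := by
  rw [stdGen, ← Submodule.Quotient.mk_smul]
  congr 1
  exact Subtype.ext (hid i)

/-- The trace of the later projectives in `Af i` is invisible to `f j` if `f j A f l = 0` for all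
`l > i`. -/
theorem mul_trace_eq_zero {A : Type} [Ring A] {m : ℕ} {f : Fin m → A} {i j : Fin m}
    (h : ∀ l, i < l → ∀ a, f j * a * f l = 0) {z : A} (hz : z ∈ stdTrace A f i) :
    f j * z = 0 := by
  have key : ∀ b, f j * b * z = 0 := by
    refine Submodule.span_induction (p := fun z _ => ∀ b, f j * b * z = 0) ?_ ?_ ?_ ?_ hz
    · rintro x ⟨l, hl, b', rfl⟩ b
      rw [← mul_assoc, ← mul_assoc, h l hl, zero_mul, zero_mul]
    · intro b
      rw [mul_zero]
    · intro x y _ _ hx hy b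
      rw [mul_add, hx, hy, add_zero]
    · intro a x _ hx b
      rw [smul_eq_mul, ← mul_assoc, mul_assoc (f j), hx]
  simpa using key 1

/-- A directed algebra with trivial corners has simple standard modules: modulo the trace,
`Af i` is spanned by `f i` alone. -/
theorem std_simple_of_directed {k A : Type} [Field k] [Ring A] [Algebra k A] {m : ℕ}
    {f : Fin m → A} (hid : ∀ i, f i * f i = f i) (hsum : ∑ i, f i = 1) (hne : ∀ i, f i ≠ 0)
    (hdir : IsDirectedAlgebra A f) (htriv : TrivialCorners k f) (i : Fin m) :
    IsSimpleModule A (StdMod A f i) := by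
  have hgen : stdGen f i ≠ 0 := by
    intro h
    rw [← one_smul A (stdGen f i), smul_stdGen_eq_zero, one_mul] at h
    apply hne i
    rw [← hid i]
    exact mul_trace_eq_zero (fun l hl a => hdir l i hl a) h
  have hscal : ∀ a : A, ∃ c : k, a • stdGen f i = algebraMap k A c • stdGen f i := by
    intro a
    obtain ⟨c, hc⟩ := htriv i a
    refine ⟨c, ?_⟩
    rw [← sub_eq_zero, ← sub_smul, smul_stdGen_eq_zero]
    have h1 : (a - algebraMap k A c) * f i = ∑ j, f j * ((a - algebraMap k A c) * f i) := by
      rw [← Finset.sum_mul, hsum, one_mul]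
    rw [h1]
    refine Submodule.sum_mem _ fun j _ => ?_
    rcases lt_trichotomy j i with hj | rfl | hj
    · rw [← mul_assoc, hdir i j hj]
      exact zero_mem _
    · rw [← mul_assoc, mul_sub, sub_mul, hc, ← Algebra.commutes, mul_assoc, hid,
        ← Algebra.smul_def, sub_self]
      exact zero_mem _
    · exact Submodule.subset_span ⟨j, hj, _, (mul_assoc _ _ _).symm⟩
  rw [isSimpleModule_iff_toSpanSingleton_surjective]
  refine ⟨⟨⟨_, _, hgen⟩⟩, fun z hz w => ?_⟩
  obtain ⟨a, rfl⟩ := exists_smul_stdGen z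
  obtain ⟨b, rfl⟩ := exists_smul_stdGen w
  obtain ⟨c, hc⟩ := hscal a
  have hc0 : c ≠ 0 := by
    rintro rfl
    rw [hc, map_zero, zero_smul] at hz
    exact hz rfl
  refine ⟨b * algebraMap k A c⁻¹, ?_⟩
  rw [LinearMap.toSpanSingleton_apply, hc, smul_smul, mul_assoc, ← map_mul, inv_mul_cancel₀ hc0,
    map_one, mul_one]

theorem indec_of_trivial_corner {k A : Type} [Field k] [Ring A] [Algebra k A] {f : A}
    (hid : f * f = f) (hne : f ≠ 0) (htriv : ∀ a, ∃ c : k, f * a * f = c • f) :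
    IsIndecModule A ↥(Submodule.span A {f}) := by
  let g : ↥(Submodule.span A {f}) := ⟨f, Submodule.mem_span_singleton_self _⟩
  have hg : ∀ p : Submodule A ↥(Submodule.span A {f}), g ∈ p → p = ⊤ := by
    intro p hp
    rw [eq_top_iff]
    intro z _
    have hz : z = (z : A) • g := Subtype.ext ((mem_span_idem hid _).mp z.2).symm
    rw [hz]
    exact p.smul_mem _ hp
  refine ⟨⟨⟨g, 0, fun h => hne (congrArg Subtype.val h)⟩⟩, fun p q hpq => ?_⟩
  obtain ⟨u, hu, v, hv, huv⟩ := Submodule.mem_sup.mp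
    (hpq.sup_eq_top.symm ▸ Submodule.mem_top : g ∈ p ⊔ q)
  obtain ⟨c, hc⟩ := htriv u
  have hfu : f • u = algebraMap k A c • g := by
    apply Subtype.ext
    change f * (u : A) = algebraMap k A c * f
    rw [← Algebra.smul_def, ← hc, mul_assoc, (mem_span_idem hid _).mp u.2]
  -- if the `f`-coordinate of `u` is nonzero then `p` contains the generator, otherwise `q` does
  by_cases hc0 : c = 0
  · left
    have hq : g ∈ q := by
      have h1 : g = f • v := by
        have h2 : f • g = g := Subtype.ext hid
        rw [← h2, ← huv, smul_add, hfu, hc0, map_zero, zero_smul, zero_add]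
      rw [h1]
      exact q.smul_mem _ hv
    have := hpq.inf_eq_bot
    rwa [hg q hq, inf_top_eq] at this
  · right
    have hp : g ∈ p := by
      have h1 : g = algebraMap k A c⁻¹ • f • u := by
        rw [hfu, smul_smul, ← map_mul, inv_mul_cancel₀ hc0, map_one, one_smul]
      rw [h1]
      exact p.smul_mem _ (p.smul_mem _ hu)
    have := hpq.inf_eq_bot
    rwa [hg p hp, top_inf_eq] at this

/-- If the simple modules are one-dimensional and the standard modules are simple, then
`f j A f i ⊆ ∑_{l > i} f j A f l A f i + δ_{ij} k f i`, and downward induction on `i` shows that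
the algebra is directed with trivial corners. -/
theorem directed_of_std_simple {k A : Type} [Field k] [Ring A] [Algebra k A] {m : ℕ}
    {f : Fin m → A} (hid : ∀ i, f i * f i = f i) (horth : ∀ i j, i ≠ j → f i * f j = 0)
    (hA : ScalarOnSimples k A) (hsimp : ∀ i, IsSimpleModule A (StdMod A f i)) :
    IsDirectedAlgebra A f ∧ TrivialCorners k f := by
  have hdir : IsDirectedAlgebra A f := by
    intro i
    induction i using WellFoundedGT.induction with
    | ind i ih =>
      intro j hj a
      have := hsimp i
      have hnt := IsSimpleModule.nontrivial A (StdMod A f i)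
      have h0 : f j • a • stdGen f i = 0 :=
        hA.orthogonal (horth i j hj.ne') (StdMod A f i) (s := stdGen f i)
          (by rw [idem_smul_stdGen hid]; exact stdGen_ne_zero) _
      rw [smul_smul, smul_stdGen_eq_zero] at h0
      have h1 := mul_trace_eq_zero (j := j) (fun l hl a => ih l hl j (hj.trans hl) a) h0
      rwa [← mul_assoc, ← mul_assoc, hid] at h1
  refine ⟨hdir, fun i a => ?_⟩
  obtain ⟨c, hc⟩ := hA (StdMod A f i) (hsimp i) a
  refine ⟨c, ?_⟩
  have h0 := hc (stdGen f i)
  rw [← sub_eq_zero, ← sub_smul, smul_stdGen_eq_zero] at h0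
  have h1 := mul_trace_eq_zero (j := i) (fun l hl a => hdir l i hl a) h0
  rw [← mul_assoc, mul_sub, sub_mul, ← Algebra.commutes, mul_assoc (algebraMap k A c), hid,
    ← Algebra.smul_def, sub_eq_zero] at h1
  exact h1

/-- If every simple module is a standard module and the simple modules are one-dimensional, then
every standard module is simple: a simple module with `f i S ≠ 0` can only be `Δ_i`. -/
theorem std_simple_of_filtration {k A : Type} [Field k] [Ring A] [Algebra k A] {m : ℕ}
    {f : Fin m → A} (hid : ∀ i, f i * f i = f i) (horth : ∀ i j, i ≠ j → f i * f j = 0)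
    (hne : ∀ i, f i ≠ 0) (hA : ScalarOnSimples k A)
    (hfil : ∀ (M : Type) [AddCommGroup M] [Module A M], Module.Finite A M →
      HasStdFiltration A f M) (i : Fin m) : IsSimpleModule A (StdMod A f i) := by
  obtain ⟨L, hL, s, hs⟩ := exists_simple_idem (hid i) (hne i)
  obtain ⟨j, ⟨E⟩⟩ := simple_equiv_of_filtration (f := f) (↥(Submodule.span A {f i}) ⧸ L)
    (hfil _ inferInstance)
  have hj : IsSimpleModule A (StdMod A f j) := E.isSimpleModule_iff.mp hL
  have hnt := IsSimpleModule.nontrivial A (StdMod A f j)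
  by_cases hij : i = j
  · rwa [hij]
  · exfalso
    have h1 := hA.orthogonal (horth i j hij) (StdMod A f j) (s := E s)
      (by rwa [← map_smul, Ne, LinearEquiv.map_eq_zero_iff]) (stdGen f j)
    rw [idem_smul_stdGen hid] at h1
    exact stdGen_ne_zero h1

/-! ### Quotients of hereditary algebras are directed -/

/-- Elementwise primitivity: `e` is a nonzero idempotent and the only idempotents of `eHe` are `0`
and `e`. -/
def PrimIdem {H : Type} [Ring H] (e : H) : Prop :=
  e * e = e ∧ e ≠ 0 ∧ ∀ a, a * a = a → e * a = a → a * e = a → a = 0 ∨ a = e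

/-- In a finite-dimensional algebra each idempotent is a sum of orthogonal primitive ones. The
induction is on the dimension of `He`. -/
theorem exists_primitive_decomposition (k : Type) {H : Type} [Field k] [Ring H] [Algebra k H]
    [FiniteDimensional k H] (d : ℕ) : ∀ e : H, e * e = e →
      Module.finrank k (LinearMap.range (LinearMap.mulRight k e)) ≤ d →
      ∃ s : Finset H, (∀ x ∈ s, PrimIdem x) ∧ (∀ x ∈ s, ∀ y ∈ s, x ≠ y → x * y = 0) ∧
        (∀ x ∈ s, e * x = x ∧ x * e = x) ∧ ∑ x ∈ s, x = e := by
  classical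
  induction d with
  | zero =>
    intro e he hd
    have h0 : LinearMap.range (LinearMap.mulRight k e) = ⊥ :=
      Submodule.finrank_eq_zero.mp (Nat.le_zero.mp hd)
    have h1 : e ∈ LinearMap.range (LinearMap.mulRight k e) := ⟨e, he⟩
    rw [h0, Submodule.mem_bot] at h1
    exact ⟨∅, by simp, by simp, by simp, by simp [h1]⟩
  | succ d ih =>
    intro e he hd
    by_cases he0 : e = 0
    · exact ⟨∅, by simp, by simp, by simp, by simp [he0]⟩
    by_cases hp : PrimIdem e
    · refine ⟨{e}, by simpa using hp, ?_, by simpa using he, by simp⟩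
      intro x hx y hy hxy
      rw [Finset.mem_singleton] at hx hy
      exact absurd (hx.trans hy.symm) hxy
    -- split `e = a + b` and decompose the two summands, whose left ideals are strictly smaller
    have hsplit : ∃ a, a * a = a ∧ e * a = a ∧ a * e = a ∧ a ≠ 0 ∧ a ≠ e := by
      by_contra! hcon
      refine hp ⟨he, he0, fun a h1 h2 h3 => ?_⟩
      by_cases h : a = 0
      · exact Or.inl h
      · exact Or.inr (hcon a h1 h2 h3 h)
    obtain ⟨a, haa, hea, hae, ha0, hane⟩ := hsplit
    have hlt : ∀ a b : H, a * a = a → b * b = b → a * b = 0 → b ≠ 0 → a + b = e →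
        a * e = a → b * e = b →
        Module.finrank k (LinearMap.range (LinearMap.mulRight k a)) ≤ d := by
      intro a b haa hbb hab hb0 hsum hae hbe
      have hlt : LinearMap.range (LinearMap.mulRight k a) <
          LinearMap.range (LinearMap.mulRight k e) := by
        refine lt_of_le_of_ne ?_ ?_
        · rintro _ ⟨z, rfl⟩
          exact ⟨z * a, by simp [mul_assoc, hae]⟩
        · intro heq
          have hb : b ∈ LinearMap.range (LinearMap.mulRight k e) := ⟨b, hbe⟩
          rw [← heq] at hb
          obtain ⟨z, hz⟩ := hb
          apply hb0
          rw [LinearMap.mulRight_apply] at hz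
          rw [← hbb]
          nth_rewrite 1 [← hz]
          rw [mul_assoc, hab, mul_zero]
      have := Submodule.finrank_lt_finrank_of_lt hlt
      omega
    have hbb : (e - a) * (e - a) = e - a := by
      simp only [mul_sub, sub_mul, he, hea, hae, haa]
      abel
    have hab : a * (e - a) = 0 := by rw [mul_sub, hae, haa, sub_self]
    have hba : (e - a) * a = 0 := by rw [sub_mul, hea, haa, sub_self]
    have hb0 : e - a ≠ 0 := fun h => hane (sub_eq_zero.mp h).symm
    have heb : e * (e - a) = e - a := by rw [mul_sub, he, hea]
    have hbe : (e - a) * e = e - a := by rw [sub_mul, he, hae]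
    obtain ⟨s, hs1, hs2, hs3, hs4⟩ := ih a haa
      (hlt a (e - a) haa hbb hab hb0 (by abel) hae hbe)
    obtain ⟨t, ht1, ht2, ht3, ht4⟩ := ih (e - a) hbb
      (hlt (e - a) a hbb haa hba ha0 (by abel) hbe hae)
    have hsum : a + (e - a) = e := by abel
    generalize e - a = b at *
    have hst : ∀ x ∈ s, ∀ y ∈ t, x * y = 0 := by
      intro x hx y hy
      rw [← (hs3 x hx).2, ← (ht3 y hy).1, mul_assoc, ← mul_assoc a, hab, zero_mul, mul_zero]
    have hts : ∀ x ∈ t, ∀ y ∈ s, x * y = 0 := by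
      intro x hx y hy
      rw [← (ht3 x hx).2, ← (hs3 y hy).1, mul_assoc, ← mul_assoc b, hba, zero_mul, mul_zero]
    have hdisj : Disjoint s t := by
      rw [Finset.disjoint_left]
      intro x hx hx'
      exact (hs1 x hx).2.1 (by rw [← (hs1 x hx).1]; exact hst x hx x hx')
    refine ⟨s ∪ t, ?_, ?_, ?_, ?_⟩
    · intro x hx
      rcases Finset.mem_union.mp hx with hx | hx
      · exact hs1 x hx
      · exact ht1 x hx
    · intro x hx y hy hxy
      rcases Finset.mem_union.mp hx with hx | hx <;> rcases Finset.mem_union.mp hy with hy | hy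
      · exact hs2 x hx y hy hxy
      · exact hst x hx y hy
      · exact hts x hx y hy
      · exact ht2 x hx y hy hxy
    · intro x hx
      rcases Finset.mem_union.mp hx with hx | hx
      · have := hs3 x hx
        constructor
        · rw [← this.1, ← mul_assoc, hea]
        · rw [← this.2, mul_assoc, hae]
      · have := ht3 x hx
        constructor
        · rw [← this.1, ← mul_assoc, heb]
        · rw [← this.2, mul_assoc, hbe]
    · rw [Finset.sum_union hdisj, hs4, ht4, hsum]

/-- A nonzero map between indecomposable projectives over a hereditary ring is injective: its image
is projective, so its kernel is a direct summand. Here the map is right multiplication by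
`x ∈ eH` on `He`. -/
theorem mul_right_injective_of_hereditary {H : Type} [Ring H]
    (hher : ∀ N : Submodule H H, Module.Projective H ↥N) {e x : H} (he : PrimIdem e)
    (hx : e * x = x) (hx0 : x ≠ 0) {y : H} (hy : y * e = y) (hyx : y * x = 0) : y = 0 := by
  let g : H →ₗ[H] ↥(LinearMap.range (LinearMap.toSpanSingleton H H x)) :=
    (LinearMap.toSpanSingleton H H x).rangeRestrict
  have := hher (LinearMap.range (LinearMap.toSpanSingleton H H x))
  obtain ⟨σ, hσ⟩ := Module.projective_lifting_property g LinearMap.id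
    (LinearMap.surjective_rangeRestrict _)
  let ξ : ↥(LinearMap.range (LinearMap.toSpanSingleton H H x)) := g 1
  have hξ : ∀ h : H, g h = h • ξ := by
    intro h
    rw [← map_smul, smul_eq_mul, mul_one]
  have hξv : (ξ : H) = x := by
    change (1 : H) • x = x
    rw [one_smul]
  set u := σ ξ with hu
  have hux : u • ξ = ξ := by
    rw [← hξ]
    exact LinearMap.congr_fun hσ ξ
  have huu : u * u = u := by
    rw [← smul_eq_mul, hu, ← map_smul, ← hu, hux]
  have heξ : e • ξ = ξ := by
    apply Subtype.ext
    rw [Submodule.coe_smul, hξv, smul_eq_mul, hx]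
  have heu : e * u = u := by
    rw [← smul_eq_mul, hu, ← map_smul, heξ]
  have hux' : u * x = x := by
    have := congrArg Subtype.val hux
    rwa [Submodule.coe_smul, hξv] at this
  rcases he.2.2 (u * e) (by rw [mul_assoc, ← mul_assoc e, heu, ← mul_assoc, huu])
    (by rw [← mul_assoc, heu]) (by rw [mul_assoc, he.1]) with h | h
  · exfalso
    apply hx0
    rw [← hux', ← hx, ← mul_assoc, h, zero_mul]
  · have hyu : y * u = 0 := by
      have hyξ : y • ξ = 0 := by
        apply Subtype.ext
        rw [Submodule.coe_smul, hξv, smul_eq_mul, hyx]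
        rfl
      rw [← smul_eq_mul, hu, ← map_smul, hyξ, map_zero]
    rw [← hy, ← h, ← mul_assoc, hyu, zero_mul]

/-- A quotient of a finite-dimensional hereditary algebra, all of whose simple modules are
one-dimensional, is directed with trivial corners. The idempotents are the nonzero images of the
primitive idempotents `e` of `H`, ordered by decreasing dimension of `He`. -/
theorem directed_of_hereditary_quotient {k A H : Type} [Field k] [IsAlgClosed k] [Ring A]
    [Algebra k A] [Ring H] [Algebra k H] [FiniteDimensional k H]
    (hher : ∀ N : Submodule H H, Module.Projective H ↥N)
    (φ : H →ₐ[k] A) (hφ : Function.Surjective φ) (hA : ScalarOnSimples k A) :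
    ∃ (m : ℕ) (f : Fin m → A), (∀ i, f i * f i = f i) ∧ (∀ i j, i ≠ j → f i * f j = 0) ∧
      (∑ i, f i = 1) ∧ (∀ i, f i ≠ 0) ∧ IsDirectedAlgebra A f ∧ TrivialCorners k f := by
  classical
  obtain ⟨s, hs1, hs2, -, hs4⟩ := exists_primitive_decomposition k
    (Module.finrank k (LinearMap.range (LinearMap.mulRight k (1 : H)))) (1 : H) (one_mul 1) le_rfl
  let s' := s.filter fun x => φ x ≠ 0
  let dm : H → ℕ := fun x => Module.finrank k (LinearMap.range (LinearMap.mulRight k x))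
  let E : Fin s'.card ≃ s' := s'.equivFin.symm
  let v : Fin s'.card → ℕᵒᵈ := fun i => OrderDual.toDual (dm (E i))
  let g : Fin s'.card → H := fun i => (E (Tuple.sort v i) : H)
  have hgmem : ∀ i, g i ∈ s ∧ φ (g i) ≠ 0 := fun i => Finset.mem_filter.mp (E _).2
  have hginj : Function.Injective g := fun i j h =>
    (Tuple.sort v).injective (E.injective (Subtype.ext h))
  have hgdim : ∀ i j, i ≤ j → dm (g j) ≤ dm (g i) := fun i j hij =>
    OrderDual.toDual_le_toDual.mp (Tuple.monotone_sort v hij)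
  have hprim : ∀ i, PrimIdem (g i) := fun i => hs1 _ (hgmem i).1
  have horth : ∀ i j, i ≠ j → g i * g j = 0 := fun i j hij =>
    hs2 _ (hgmem i).1 _ (hgmem j).1 fun h => hij (hginj h)
  refine ⟨s'.card, fun i => φ (g i), ?_, ?_, ?_, fun i => (hgmem i).2, ?_, ?_⟩
  · intro i
    rw [← map_mul, (hprim i).1]
  · intro i j hij
    rw [← map_mul, horth i j hij, map_zero]
  · have h1 : ∑ i, φ (g i) = ∑ x ∈ s', φ x := by
      rw [← Finset.sum_coe_sort s', ← Equiv.sum_comp ((Tuple.sort v).trans E)]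
      rfl
    rw [h1, Finset.sum_filter_ne_zero, ← map_sum, hs4, map_one]
  · intro i j hji a
    obtain ⟨b, rfl⟩ := hφ a
    rw [← map_mul, ← map_mul]
    by_contra hne
    set x := g j * b * g i with hx
    have hx0 : x ≠ 0 := fun h => hne (by rw [h, map_zero])
    have hx1 : g j * x = x := by rw [hx, ← mul_assoc, ← mul_assoc, (hprim j).1]
    have hx2 : x * g i = x := by rw [hx, mul_assoc, (hprim i).1]
    clear_value x
    -- right multiplication by `x` embeds `H (g j)` in `H (g i)`, which is not larger
    let R : ↥(LinearMap.range (LinearMap.mulRight k (g j))) →ₗ[k]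
        ↥(LinearMap.range (LinearMap.mulRight k (g i))) :=
      (LinearMap.mulRight k x).restrict (by
        rintro z -
        exact ⟨z * x, by simp [mul_assoc, hx2]⟩)
    have hRinj : Function.Injective R := by
      rw [← LinearMap.ker_eq_bot, LinearMap.ker_eq_bot']
      rintro ⟨z, hz⟩ h
      obtain ⟨w, rfl⟩ := hz
      apply Subtype.ext
      refine mul_right_injective_of_hereditary hher (hprim j) hx1 hx0 ?_ (congrArg Subtype.val h)
      simp [mul_assoc, (hprim j).1]
    have hdim := le_antisymm (LinearMap.finrank_le_finrank_of_injective hRinj) (hgdim j i hji.le)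
    obtain ⟨⟨z, hz⟩, hzx⟩ := (LinearMap.injective_iff_surjective_of_finrank_eq_finrank hdim).mp
      hRinj ⟨g i, ⟨g i, (hprim i).1⟩⟩
    have hzx' : z * x = g i := congrArg Subtype.val hzx
    -- now `g i = z x` factors through `g j`, so both act nontrivially on some simple module
    obtain ⟨L, hL, t, ht⟩ := exists_simple_idem (e := φ (g i))
      (by rw [← map_mul, (hprim i).1]) (hgmem i).2
    have h0 := hA.orthogonal (e := φ (g i)) (e' := φ (g j))
      (by rw [← map_mul, horth i j hji.ne', map_zero]) _ ht (φ x • t)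
    apply ht
    have hfac : φ (g i) = φ z * (φ (g j) * φ x) := by rw [← map_mul, ← map_mul, hx1, hzx']
    refine (congrArg (· • t) hfac).trans ?_
    change (φ z * (φ (g j) * φ x)) • t = 0
    rw [mul_smul, mul_smul, h0, smul_zero]
  · intro i a
    obtain ⟨b, rfl⟩ := hφ a
    obtain ⟨c, z, hz0, hz1, hz2⟩ := exists_eigenvalue_corner (k := k) (x := g i * b * g i)
      (hprim i).1 (hprim i).2.1 (by rw [mul_assoc, (hprim i).1])
    refine ⟨c, ?_⟩
    by_contra hne
    refine hz0 (mul_right_injective_of_hereditary hher (hprim i) ?_ ?_ hz1 hz2)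
    · rw [mul_sub, ← mul_assoc, ← mul_assoc, (hprim i).1, mul_smul_comm, (hprim i).1]
    · intro h
      apply hne
      rw [← map_mul, ← map_mul, sub_eq_zero.mp h, map_smul]

/-! ### Projective kernels -/

/-- Schanuel's argument: if one surjection from a projective module onto `X` has projective kernel,
then so does every surjection from a projective module onto `X`. -/
theorem projective_ker_of_resolution {R P₀ P X : Type} [Ring R] [AddCommGroup P₀] [Module R P₀]
    [AddCommGroup P] [Module R P] [AddCommGroup X] [Module R X]
    [Module.Projective R P₀] [Module.Projective R P] (g₀ : P₀ →ₗ[R] X) (g : P →ₗ[R] X)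
    (h₀ : Function.Surjective g₀) (h : Function.Surjective g)
    (hK : Module.Projective R ↥(LinearMap.ker g₀)) : Module.Projective R ↥(LinearMap.ker g) := by
  obtain ⟨α, hα⟩ := Module.projective_lifting_property g g₀ h
  obtain ⟨β, hβ⟩ := Module.projective_lifting_property g₀ g h₀
  have hα' : ∀ y, g (α y) = g₀ y := fun y => LinearMap.congr_fun hα y
  have hβ' : ∀ y, g₀ (β y) = g y := fun y => LinearMap.congr_fun hβ y
  -- `x ↦ (x, β x)` splits `(p, y) ↦ (p - α (β p)) + α y`
  let i : ↥(LinearMap.ker g) →ₗ[R] P × ↥(LinearMap.ker g₀) :=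
    (LinearMap.ker g).subtype.prod (β.restrict (p := LinearMap.ker g) (q := LinearMap.ker g₀) (by
      intro x hx
      rw [LinearMap.mem_ker] at hx ⊢
      rw [hβ', hx]))
  let r : P →ₗ[R] ↥(LinearMap.ker g) := (LinearMap.id - α.comp β).codRestrict _ (by
    intro p
    simp [hα', hβ'])
  let α' : ↥(LinearMap.ker g₀) →ₗ[R] ↥(LinearMap.ker g) :=
    α.restrict (p := LinearMap.ker g₀) (q := LinearMap.ker g) (by
      intro x hx
      rw [LinearMap.mem_ker] at hx ⊢
      rw [hα', hx])
  refine Module.Projective.of_split i (r.coprod α') ?_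
  ext x
  change ((x : P) - α (β x)) + α (β x) = x
  abel

/-- If `H` is projective as a `T`-module, then projective `H`-modules are projective over `T`. -/
theorem projective_inflate {T H Z : Type} [Ring T] [Ring H] [Module T H] [IsScalarTower T H H]
    [Module.Projective T H] [AddCommGroup Z] [Module H Z] [Module T Z] [IsScalarTower T H Z]
    (hZ : Module.Projective H Z) : Module.Projective T Z := by
  classical
  obtain ⟨s, hs⟩ := hZ.out
  have hT : ∀ (W : Type) [AddCommGroup W] [Module H W] [Module T W] [IsScalarTower T H W]
      (t : T) (w : W), t • w = (t • (1 : H)) • w := by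
    intro W _ _ _ _ t w
    rw [smul_assoc, one_smul]
  let s' : Z →ₗ[T] (Z →₀ H) :=
    { toFun := s
      map_add' := map_add s
      map_smul' := fun t z => by
        rw [RingHom.id_apply, hT Z, map_smul, hT (Z →₀ H) t] }
  let p : (Z →₀ H) →ₗ[T] Z :=
    { toFun := Finsupp.linearCombination H id
      map_add' := map_add _
      map_smul' := fun t z => by
        rw [RingHom.id_apply, hT (Z →₀ H), map_smul, hT Z t] }
  have : Module.Projective T (Z →₀ H) :=
    Module.Projective.of_equiv (finsuppLequivDFinsupp (ι := Z) (M := H) T).symm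
  exact Module.Projective.of_split s' p (LinearMap.ext fun z => hs z)

/-! ### One-point extensions -/

/-- The one-point extension of a `k`-algebra `H` by the free module `H^d`: matrices
`[[h, v], [0, c]]` with `h ∈ H`, `v ∈ H^d`, `c ∈ k`, encoded as triples `(h, v, c)`. -/
def OnePtExt (k H : Type) (d : ℕ) : Type := H × (Fin d → H) × k

namespace OnePtExt

set_option linter.unusedSectionVars false

variable {k H : Type} [Field k] [Ring H] [Algebra k H] {d : ℕ}

instance : AddCommGroup (OnePtExt k H d) := inferInstanceAs (AddCommGroup (H × (Fin d → H) × k))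

instance : Module k (OnePtExt k H d) := inferInstanceAs (Module k (H × (Fin d → H) × k))

/-- The upper left entry. -/
def fst (x : OnePtExt k H d) : H := x.1

/-- The upper right entry. -/
def col (x : OnePtExt k H d) : Fin d → H := x.2.1

/-- The lower right entry. -/
def sc (x : OnePtExt k H d) : k := x.2.2

/-- The matrix with the given entries. -/
def mk (h : H) (v : Fin d → H) (c : k) : OnePtExt k H d := (h, v, c)

@[ext]
theorem ext {x y : OnePtExt k H d} (h1 : x.fst = y.fst) (h2 : ∀ i, x.col i = y.col i)
    (h3 : x.sc = y.sc) : x = y :=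
  Prod.ext h1 (Prod.ext (funext h2) h3)

@[simp] theorem fst_mk (h : H) (v : Fin d → H) (c : k) : (mk h v c).fst = h := rfl
@[simp] theorem col_mk (h : H) (v : Fin d → H) (c : k) : (mk h v c).col = v := rfl
@[simp] theorem sc_mk (h : H) (v : Fin d → H) (c : k) : (mk h v c).sc = c := rfl
@[simp] theorem fst_zero : (0 : OnePtExt k H d).fst = 0 := rfl
@[simp] theorem col_zero (i : Fin d) : (0 : OnePtExt k H d).col i = 0 := rfl
@[simp] theorem sc_zero : (0 : OnePtExt k H d).sc = 0 := rfl
@[simp] theorem fst_add (x y : OnePtExt k H d) : (x + y).fst = x.fst + y.fst := rfl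
@[simp] theorem col_add (x y : OnePtExt k H d) (i : Fin d) :
    (x + y).col i = x.col i + y.col i := rfl
@[simp] theorem sc_add (x y : OnePtExt k H d) : (x + y).sc = x.sc + y.sc := rfl
@[simp] theorem fst_smul (c : k) (x : OnePtExt k H d) : (c • x).fst = c • x.fst := rfl
@[simp] theorem col_smul (c : k) (x : OnePtExt k H d) (i : Fin d) :
    (c • x).col i = c • x.col i := rfl
@[simp] theorem sc_smul (c : k) (x : OnePtExt k H d) : (c • x).sc = c * x.sc := rfl

instance : Mul (OnePtExt k H d) :=
  ⟨fun x y => mk (x.fst * y.fst) (fun i => x.fst * y.col i + y.sc • x.col i) (x.sc * y.sc)⟩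

instance : One (OnePtExt k H d) := ⟨mk 1 0 1⟩

@[simp] theorem fst_mul (x y : OnePtExt k H d) : (x * y).fst = x.fst * y.fst := rfl
@[simp] theorem col_mul (x y : OnePtExt k H d) (i : Fin d) :
    (x * y).col i = x.fst * y.col i + y.sc • x.col i := rfl
@[simp] theorem sc_mul (x y : OnePtExt k H d) : (x * y).sc = x.sc * y.sc := rfl
@[simp] theorem fst_one : (1 : OnePtExt k H d).fst = 1 := rfl
@[simp] theorem col_one (i : Fin d) : (1 : OnePtExt k H d).col i = 0 := rfl
@[simp] theorem sc_one : (1 : OnePtExt k H d).sc = 1 := rfl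

instance : Ring (OnePtExt k H d) :=
  { (inferInstance : AddCommGroup (OnePtExt k H d)) with
    mul := (· * ·)
    one := 1
    mul_assoc := fun x y z => by
      ext i
      · simp [mul_assoc]
      · simp [mul_assoc, mul_add, smul_add, smul_smul, add_assoc, mul_comm]
      · simp [mul_assoc]
    one_mul := fun x => by ext i <;> simp
    mul_one := fun x => by ext i <;> simp
    left_distrib := fun x y z => by
      ext i
      · simp [mul_add]
      · simp only [col_mul, col_add, sc_add, mul_add, add_smul]
        abel
      · simp [mul_add]
    right_distrib := fun x y z => by
      ext i
      · simp [add_mul]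
      · simp only [col_mul, col_add, fst_add, add_mul, smul_add]
        abel
      · simp [add_mul]
    zero_mul := fun x => by ext i <;> simp
    mul_zero := fun x => by ext i <;> simp }

instance : Algebra k (OnePtExt k H d) :=
  Algebra.ofModule
    (fun c x y => by
      ext i
      · simp
      · simp [smul_add, smul_comm c y.sc]
      · simp [mul_assoc])
    (fun c x y => by
      ext i
      · simp
      · simp [smul_add, mul_smul]
      · simp [mul_left_comm])

instance [FiniteDimensional k H] : FiniteDimensional k (OnePtExt k H d) :=
  inferInstanceAs (FiniteDimensional k (H × (Fin d → H) × k))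

/-- `H` is a module over its one-point extension through the projection to the upper left entry. -/
instance : Module (OnePtExt k H d) H where
  smul t h := t.fst * h
  one_smul h := one_mul h
  mul_smul _ _ _ := mul_assoc _ _ _
  smul_zero t := mul_zero _
  smul_add t := mul_add _
  add_smul t t' h := add_mul _ _ _
  zero_smul h := zero_mul _

theorem smul_def (t : OnePtExt k H d) (h : H) : t • h = t.fst * h := rfl

instance : IsScalarTower (OnePtExt k H d) H H := ⟨fun t h h' => mul_assoc _ _ _⟩

/-- `H` is the projective left ideal of the matrices `[[h, 0], [0, 0]]`. -/
instance : Module.Projective (OnePtExt k H d) H := by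
  let i : H →ₗ[OnePtExt k H d] OnePtExt k H d :=
    { toFun := fun h => mk h 0 0
      map_add' := fun x y => by ext i <;> simp
      map_smul' := fun t x => by ext i <;> simp [smul_def] }
  let s : OnePtExt k H d →ₗ[OnePtExt k H d] H :=
    { toFun := fun t => t.fst
      map_add' := fun x y => rfl
      map_smul' := fun t x => rfl }
  exact Module.Projective.of_split i s rfl

/-- The left ideal of matrices with lower right entry `0`; the kernel of the projection to `k`. -/
def colIdeal (k H : Type) [Field k] [Ring H] [Algebra k H] (d : ℕ) :
    Submodule (OnePtExt k H d) (OnePtExt k H d) where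
  carrier := {x | x.sc = 0}
  add_mem' := by
    intro x y hx hy
    simp only [Set.mem_ofPred_eq] at *
    simp [hx, hy]
  zero_mem' := rfl
  smul_mem' := by
    intro t x hx
    simp only [Set.mem_ofPred_eq] at *
    simp [hx]

theorem mem_colIdeal {x : OnePtExt k H d} : x ∈ colIdeal k H d ↔ x.sc = 0 := Iff.rfl

/-- As a left module, `colIdeal` is the sum of `d + 1` copies of the projective module `H`. -/
theorem projective_colIdeal : Module.Projective (OnePtExt k H d) ↥(colIdeal k H d) := by
  have : Module.Projective (OnePtExt k H d) (H × (Fin d → H)) :=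
    projective_inflate (H := H) inferInstance
  let i : ↥(colIdeal k H d) →ₗ[OnePtExt k H d] H × (Fin d → H) :=
    { toFun := fun x => (x.1.fst, x.1.col)
      map_add' := fun x y => rfl
      map_smul' := fun t x => by
        refine Prod.ext rfl (funext fun i => ?_)
        change t.fst * x.1.col i + x.1.sc • t.col i = t.fst * x.1.col i
        rw [mem_colIdeal.mp x.2, zero_smul, add_zero] }
  let s : H × (Fin d → H) →ₗ[OnePtExt k H d] ↥(colIdeal k H d) :=
    { toFun := fun p => ⟨mk p.1 p.2 0, rfl⟩
      map_add' := fun x y => by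
        apply Subtype.ext
        ext i <;> simp
      map_smul' := fun t x => by
        apply Subtype.ext
        ext i <;> simp [smul_def] }
  refine Module.Projective.of_split i s ?_
  refine LinearMap.ext fun x => Subtype.ext ?_
  apply OnePtExt.ext
  · rfl
  · exact fun i => rfl
  · exact (mem_colIdeal.mp x.2).symm

/-- The idempotent `[[1, 0], [0, 0]]`. -/
def idem (k H : Type) [Field k] [Ring H] [Algebra k H] (d : ℕ) : OnePtExt k H d := mk 1 0 0

/-- A module killed by the idempotent of `H` is a direct sum of copies of the simple module `k` at
the new vertex, so it is a quotient of a free module by copies of the projective `colIdeal`. -/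
theorem projective_ker_of_idem_zero {P X : Type} [AddCommGroup P] [Module (OnePtExt k H d) P]
    [AddCommGroup X] [Module (OnePtExt k H d) X] [Module.Projective (OnePtExt k H d) P]
    (g : P →ₗ[OnePtExt k H d] X) (hg : Function.Surjective g)
    (hX : ∀ x : X, idem k H d • x = 0) :
    Module.Projective (OnePtExt k H d) ↥(LinearMap.ker g) := by
  classical
  let _ : Module k X := Module.compHom X (algebraMap k (OnePtExt k H d))
  have hkX : ∀ (c : k) (x : X), c • x = (algebraMap k (OnePtExt k H d) c) • x := fun c x => rfl
  have hact : ∀ (t : OnePtExt k H d) (x : X), t • x = t.sc • x := by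
    intro t x
    -- `t = idem * t + t.sc • (1 - idem)`, and `idem` kills `X`
    have h1 : t = idem k H d * t + (t.sc • (1 : OnePtExt k H d)) -
        (t.sc • (1 : OnePtExt k H d)) * idem k H d := by
      rw [eq_sub_iff_add_eq]
      ext i <;> simp [idem]
    rw [hkX, Algebra.algebraMap_eq_smul_one]
    conv_lhs => rw [h1]
    rw [sub_smul, add_smul, mul_smul, hX, mul_smul, hX, smul_zero, zero_add, sub_zero]
  let b := Module.Basis.ofVectorSpace k X
  let g₀ : (Module.Basis.ofVectorSpaceIndex k X →₀ OnePtExt k H d) →ₗ[OnePtExt k H d] X :=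
    Finsupp.linearCombination _ b
  have hg₀ : ∀ w, g₀ w =
      Finsupp.linearCombination k b (w.mapRange OnePtExt.sc sc_zero) := by
    intro w
    rw [Finsupp.linearCombination_apply, Finsupp.linearCombination_apply,
      Finsupp.sum_mapRange_index (by simp)]
    exact Finset.sum_congr rfl fun i _ => hact _ _
  refine projective_ker_of_resolution g₀ g ?_ hg ?_
  · intro x
    refine ⟨(b.repr x).mapRange (fun c => mk 0 0 c) rfl, ?_⟩
    rw [hg₀]
    conv_rhs => rw [← b.linearCombination_repr x]
    congr 1
    ext i
    rfl
  · have hL := projective_colIdeal (k := k) (H := H) (d := d)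
    let ι := Module.Basis.ofVectorSpaceIndex k X
    have : Module.Projective (OnePtExt k H d) (ι →₀ ↥(colIdeal k H d)) :=
      Module.Projective.of_equiv
        (finsuppLequivDFinsupp (ι := ι) (M := ↥(colIdeal k H d)) (OnePtExt k H d)).symm
    let J : (ι →₀ ↥(colIdeal k H d)) →ₗ[OnePtExt k H d] (ι →₀ OnePtExt k H d) :=
      Finsupp.mapRange.linearMap (colIdeal k H d).subtype
    have hJ : Function.Injective J :=
      Finsupp.mapRange_injective _ rfl Subtype.val_injective
    have hr : LinearMap.range J = LinearMap.ker g₀ := by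
      ext w
      rw [LinearMap.mem_ker, hg₀]
      constructor
      · rintro ⟨v, rfl⟩
        have : (J v).mapRange OnePtExt.sc sc_zero = 0 := by
          ext i
          exact mem_colIdeal.mp (v i).2
        rw [this, map_zero]
      · intro h
        have h0 : w.mapRange OnePtExt.sc sc_zero = 0 := by
          apply b.linearIndependent
          rw [h, map_zero]
        have h1 : ∀ i, w i ∈ colIdeal k H d := fun i => by
          have := DFunLike.congr_fun h0 i
          exact this
        refine ⟨Finsupp.onFinset w.support (fun i => ⟨w i, h1 i⟩) ?_, ?_⟩
        · intro i hi
          rw [Finsupp.mem_support_iff]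
          exact fun h => hi (Subtype.ext h)
        · ext i : 1
          rfl
    rw [← hr]
    exact Module.Projective.of_equiv (LinearEquiv.ofInjective J hJ)

/-- A module fixed by the idempotent of `H` is an `H`-module; over a hereditary `H` it has an
`H`-projective resolution of length one, which remains projective over the one-point extension. -/
theorem projective_ker_of_idem_one
    (hher : ∀ (P : Type) [AddCommGroup P] [Module H P], Module.Projective H P →
      ∀ N : Submodule H P, Module.Projective H ↥N)
    {P Y : Type} [AddCommGroup P] [Module (OnePtExt k H d) P]
    [AddCommGroup Y] [Module (OnePtExt k H d) Y] [Module.Projective (OnePtExt k H d) P]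
    (g : P →ₗ[OnePtExt k H d] Y) (hg : Function.Surjective g)
    (hY : ∀ y : Y, idem k H d • y = y) :
    Module.Projective (OnePtExt k H d) ↥(LinearMap.ker g) := by
  classical
  let _ : Module H Y :=
    { smul := fun h y => (mk h 0 0 : OnePtExt k H d) • y
      one_smul := hY
      mul_smul := fun h h' y => by
        change (mk (h * h') 0 0 : OnePtExt k H d) • y =
          (mk h 0 0 : OnePtExt k H d) • (mk h' 0 0 : OnePtExt k H d) • y
        rw [smul_smul]
        congr 1
        ext i <;> simp
      smul_zero := fun h => smul_zero _
      smul_add := fun h => smul_add _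
      add_smul := fun h h' y => by
        change (mk (h + h') 0 0 : OnePtExt k H d) • y =
          (mk h 0 0 : OnePtExt k H d) • y + (mk h' 0 0 : OnePtExt k H d) • y
        rw [← add_smul]
        congr 1
        ext i <;> simp
      zero_smul := fun y => by
        change (mk 0 0 0 : OnePtExt k H d) • y = 0
        exact zero_smul _ y }
  have hHY : ∀ (h : H) (y : Y), h • y = (mk h 0 0 : OnePtExt k H d) • y := fun h y => rfl
  have hTY : ∀ (t : OnePtExt k H d) (y : Y), t • y = t.fst • y := by
    intro t y
    conv_lhs => rw [← hY y, smul_smul]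
    rw [hHY]
    congr 1
    ext i <;> simp [idem]
  have : IsScalarTower (OnePtExt k H d) H Y := ⟨fun t h y => by
    rw [hTY, smul_smul]
    rfl⟩
  let q : (Y →₀ H) →ₗ[H] Y := Finsupp.linearCombination H id
  have hq : Function.Surjective q := fun y => ⟨Finsupp.single y 1, by simp [q]⟩
  have hT : ∀ (t : OnePtExt k H d) (w : Y →₀ H), t • w = t.fst • w := by
    intro t w
    ext i
    rfl
  let g₀ : (Y →₀ H) →ₗ[OnePtExt k H d] Y :=
    { toFun := q
      map_add' := map_add q
      map_smul' := fun t w => by rw [RingHom.id_apply, hT, map_smul, hTY] }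
  have : Module.Projective (OnePtExt k H d) (Y →₀ H) := projective_inflate (H := H) inferInstance
  refine projective_ker_of_resolution g₀ g hq hg ?_
  have hK : Module.Projective H ↥(LinearMap.ker q) := hher _ inferInstance _
  have hK' : Module.Projective (OnePtExt k H d) ↥(LinearMap.ker q) :=
    projective_inflate (H := H) (Z := ↥(LinearMap.ker q)) hK
  let E : ↥(LinearMap.ker q) ≃ₗ[OnePtExt k H d] ↥(LinearMap.ker g₀) :=
    { toFun := fun x => ⟨x.1, x.2⟩
      invFun := fun x => ⟨x.1, x.2⟩
      map_add' := fun x y => rfl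
      map_smul' := fun t x => by
        apply Subtype.ext
        change t.fst • (x : Y →₀ H) = t • (x : Y →₀ H)
        rw [hT]
      left_inv := fun x => rfl
      right_inv := fun x => rfl }
  exact Module.Projective.of_equiv E

/-- The one-point extension of a hereditary algebra by a free module is hereditary. For `N ≤ P` the
quotient `P / N` is an extension of a module killed by `idem` by a module fixed by `idem`. -/
theorem hereditary
    (hher : ∀ (P : Type) [AddCommGroup P] [Module H P], Module.Projective H P →
      ∀ N : Submodule H P, Module.Projective H ↥N)
    (P : Type) [AddCommGroup P] [Module (OnePtExt k H d) P]
    (hP : Module.Projective (OnePtExt k H d) P) (N : Submodule (OnePtExt k H d) P) :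
    Module.Projective (OnePtExt k H d) ↥N := by
  -- `N' = N + idem • P`
  let N' : Submodule (OnePtExt k H d) P :=
    N ⊔ Submodule.span (OnePtExt k H d) {x | ∃ p : P, x = idem k H d • p}
  have hN' : Module.Projective (OnePtExt k H d) ↥N' := by
    have h := projective_ker_of_idem_zero N'.mkQ N'.mkQ_surjective (by
      intro x
      obtain ⟨p, rfl⟩ := N'.mkQ_surjective x
      rw [← map_smul, Submodule.mkQ_apply, Submodule.Quotient.mk_eq_zero]
      exact Submodule.mem_sup_right (Submodule.subset_span ⟨p, rfl⟩))
    rwa [Submodule.ker_mkQ] at h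
  have hle : N ≤ N' := le_sup_left
  let M := Submodule.comap N'.subtype N
  have h2 := projective_ker_of_idem_one hher M.mkQ M.mkQ_surjective (by
    intro y
    obtain ⟨⟨z, hz⟩, rfl⟩ := M.mkQ_surjective y
    rw [← map_smul, ← sub_eq_zero, ← map_sub, Submodule.mkQ_apply, Submodule.Quotient.mk_eq_zero]
    change idem k H d • z - z ∈ N
    have hzN : z ∈ N ⊔ Submodule.span (OnePtExt k H d) {x | ∃ p : P, x = idem k H d • p} := hz
    obtain ⟨n, hn, w, hw, rfl⟩ := Submodule.mem_sup.mp hzN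
    -- `idem • P` is a submodule, since `t * idem = idem * t * idem`
    have hw' : idem k H d • w = w := by
      refine Submodule.span_induction (p := fun w _ => idem k H d • w = w) ?_ ?_ ?_ ?_ hw
      · rintro _ ⟨p, rfl⟩
        rw [smul_smul]
        congr 1
        ext i <;> simp [idem]
      · rw [smul_zero]
      · intro x y _ _ hx hy
        rw [smul_add, hx, hy]
      · intro t x _ hx
        have ht : idem k H d * (t * idem k H d) = t * idem k H d := by
          ext i <;> simp [idem]
        calc idem k H d • t • x = (idem k H d * (t * idem k H d)) • x := by
              rw [mul_smul, mul_smul, hx]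
          _ = t • x := by rw [ht, mul_smul, hx]
    rw [smul_add, hw', add_sub_add_right_eq_sub]
    exact N.sub_mem (N.smul_mem _ hn) hn)
  rw [Submodule.ker_mkQ] at h2
  exact Module.Projective.of_equiv (Submodule.comapSubtypeEquivOfLe hle)

end OnePtExt

/-! ### Building the hereditary cover -/

/-- The corner `gAg` at the idempotent `g` is the image of a finite-dimensional hereditary algebra
under a multiplicative linear map that sends `1` to `g`. -/
def HereditaryCover (k A : Type) [Field k] [Ring A] [Algebra k A] (g : A) : Prop :=
  ∃ (H : Type) (_ : Ring H) (_ : Algebra k H), FiniteDimensional k H ∧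
    (∀ (P : Type) [AddCommGroup P] [Module H P], Module.Projective H P →
      ∀ N : Submodule H P, Module.Projective H ↥N) ∧
    ∃ φ : H →ₗ[k] A, (∀ x y, φ (x * y) = φ x * φ y) ∧ φ 1 = g ∧ ∀ a, ∃ h, φ h = g * a * g

theorem hereditaryCover_zero (k A : Type) [Field k] [Ring A] [Algebra k A] :
    HereditaryCover k A 0 := by
  refine ⟨PUnit, inferInstance, inferInstance, inferInstance, ?_, 0, ?_, ?_, ?_⟩
  · intro P _ _ _ N
    have : Subsingleton P := Module.subsingleton PUnit P
    infer_instance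
  · simp
  · rfl
  · exact fun a => ⟨0, by simp⟩

/-- If `e` is a new idempotent with `e A g = 0` and `e A e = k e`, then a hereditary cover of `gAg`
extends to one of `(g + e)A(g + e)`: adjoin a vertex with `dim A` copies of the free module `H`,
which is enough to generate the `gAg`-module `gAe`. -/
theorem HereditaryCover.add {k A : Type} [Field k] [Ring A] [Algebra k A] [FiniteDimensional k A]
    {g e : A} (hg : HereditaryCover k A g) (he : e * e = e) (heg : e * g = 0) (hge : g * e = 0)
    (hdir : ∀ a, e * a * g = 0) (hsc : ∀ a, ∃ c : k, e * a * e = c • e) :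
    HereditaryCover k A (g + e) := by
  obtain ⟨H, _, _, _, hher, φ, hmul, hone, hsurj⟩ := hg
  let d := Module.finrank k A
  let b : Module.Basis (Fin d) k A := Module.finBasis k A
  have hr : ∀ x, φ x * g = φ x := fun x => by rw [← hone, ← hmul, mul_one]
  have hl : ∀ x, g * φ x = φ x := fun x => by rw [← hone, ← hmul, one_mul]
  have hφe : ∀ x, φ x * e = 0 := fun x => by rw [← hr, mul_assoc, hge, mul_zero]
  have heφ : ∀ x, e * φ x = 0 := fun x => by rw [← hl, ← mul_assoc, heg, zero_mul]
  let ψ : OnePtExt k H d →ₗ[k] A :=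
    { toFun := fun t => φ t.fst + (∑ j, φ (t.col j) * b j) * e + t.sc • e
      map_add' := fun x y => by
        simp only [OnePtExt.fst_add, OnePtExt.col_add, OnePtExt.sc_add, map_add, add_mul,
          Finset.sum_add_distrib, add_smul]
        abel
      map_smul' := fun c x => by
        simp only [OnePtExt.fst_smul, OnePtExt.col_smul, OnePtExt.sc_smul, map_smul,
          smul_mul_assoc, ← Finset.smul_sum, mul_smul, smul_add, RingHom.id_apply] }
  have hψ : ∀ t, ψ t = φ t.fst + (∑ j, φ (t.col j) * b j) * e + t.sc • e := fun t => rfl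
  refine ⟨OnePtExt k H d, inferInstance, inferInstance, inferInstance,
    fun P _ _ hP N => OnePtExt.hereditary hher P hP N, ψ, ?_, ?_, ?_⟩
  · intro x y
    have h1 : e * (∑ j, φ (y.col j) * b j) = 0 := by
      rw [Finset.mul_sum]
      exact Finset.sum_eq_zero fun j _ => by rw [← mul_assoc, heφ, zero_mul]
    have h2 : (∑ j, φ ((x * y).col j) * b j) =
        φ x.fst * (∑ j, φ (y.col j) * b j) + y.sc • (∑ j, φ (x.col j) * b j) := by
      rw [Finset.mul_sum, Finset.smul_sum, ← Finset.sum_add_distrib]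
      refine Finset.sum_congr rfl fun j _ => ?_
      rw [OnePtExt.col_mul, map_add, map_smul, hmul, add_mul, mul_assoc, smul_mul_assoc]
    rw [hψ, hψ, hψ, h2]
    generalize (∑ j, φ (y.col j) * b j) = v at h1
    generalize (∑ j, φ (x.col j) * b j) = u
    rw [OnePtExt.fst_mul, OnePtExt.sc_mul, hmul]
    have h3 : u * e * φ y.fst = 0 := by rw [mul_assoc, heφ, mul_zero]
    have h4 : u * e * (v * e) = 0 := by
      rw [mul_assoc, ← mul_assoc e, h1, zero_mul, mul_zero]
    have h5 : e * (v * e) = 0 := by rw [← mul_assoc, h1, zero_mul]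
    have h6 : u * e * e = u * e := by rw [mul_assoc, he]
    simp only [add_mul, mul_add, smul_mul_assoc, mul_smul_comm, h3, h4, h5, h6, he, heφ, hφe,
      smul_zero, smul_add, mul_smul, mul_assoc, add_zero, zero_add, mul_comm x.sc]
    abel
  · rw [hψ]
    simp [hone]
  · intro a
    obtain ⟨h, hh⟩ := hsurj a
    obtain ⟨c, hc⟩ := hsc a
    refine ⟨OnePtExt.mk h (fun j => b.repr a j • (1 : H)) c, ?_⟩
    have hsum : (∑ j, φ (b.repr a j • (1 : H)) * b j) = g * a := by
      conv_rhs => rw [← b.sum_repr a, Finset.mul_sum]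
      refine Finset.sum_congr rfl fun j _ => ?_
      rw [map_smul, hone, smul_mul_assoc, mul_smul_comm]
    rw [hψ, OnePtExt.fst_mk, OnePtExt.col_mk, OnePtExt.sc_mk, hsum, hh, ← hc, mul_add, add_mul,
      add_mul, add_mul, hdir]
    abel

/-- A directed algebra with trivial corners is a quotient of a hereditary algebra: the idempotents
are adjoined one at a time, the largest index first. -/
theorem hereditaryCover_one {k A : Type} [Field k] [Ring A] [Algebra k A] [FiniteDimensional k A]
    {m : ℕ} {f : Fin m → A} (hid : ∀ i, f i * f i = f i) (horth : ∀ i j, i ≠ j → f i * f j = 0)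
    (hsum : ∑ i, f i = 1) (hdir : IsDirectedAlgebra A f) (htriv : TrivialCorners k f) :
    HereditaryCover k A 1 := by
  classical
  have key : ∀ r, r ≤ m →
      HereditaryCover k A (∑ i ∈ Finset.univ.filter (fun i : Fin m => m ≤ i.val + r), f i) := by
    intro r
    induction r with
    | zero =>
      intro _
      rw [Finset.filter_false_of_mem (fun i _ => by have := i.isLt; omega), Finset.sum_empty]
      exact hereditaryCover_zero k A
    | succ r ih =>
      intro hr
      let p : Fin m := ⟨m - (r + 1), by omega⟩
      let S := Finset.univ.filter (fun i : Fin m => m ≤ i.val + r)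
      have hlt : ∀ i ∈ S, p < i := by
        intro i hi
        have := (Finset.mem_filter.mp hi).2
        change m - (r + 1) < i.val
        omega
      have hS : Finset.univ.filter (fun i : Fin m => m ≤ i.val + (r + 1)) = insert p S := by
        ext i
        simp only [S, p, Finset.mem_filter, Finset.mem_univ, true_and, Finset.mem_insert,
          Fin.ext_iff]
        omega
      rw [hS, Finset.sum_insert (fun h => lt_irrefl _ (hlt p h)), add_comm]
      refine (ih (by omega)).add (hid p) ?_ ?_ ?_ ?_
      · rw [Finset.mul_sum]
        exact Finset.sum_eq_zero fun i hi => horth _ _ (hlt i hi).ne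
      · rw [Finset.sum_mul]
        exact Finset.sum_eq_zero fun i hi => horth _ _ (hlt i hi).ne'
      · intro a
        rw [Finset.mul_sum]
        exact Finset.sum_eq_zero fun i hi => hdir _ _ (hlt i hi) a
      · exact htriv p
  have h := key m le_rfl
  rwa [Finset.filter_true_of_mem (fun i _ => by omega), hsum] at h

/-- For a basic finite-dimensional algebra `A` over an algebraically closed
field `k`, the following are equivalent: (1) `A` is a quotient of a finite-dimensional
hereditary `k`-algebra; (2) there is an ordering of a complete set of pairwise orthogonal
primitive idempotents for which `A` is standardly stratified and all standard modules are
simple; (3) there is such an ordering for which `A` is standardly stratified and every finitely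
generated module lies in `F(Δ)`. -/
theorem statement8
    (k : Type) [Field k] [IsAlgClosed k]
    (A : Type) [Ring A] [Algebra k A] [FiniteDimensional k A]
    (hbasic : ∃ (m : ℕ) (f : Fin m → A), (∀ i, f i * f i = f i) ∧
      (∀ i j, i ≠ j → f i * f j = 0) ∧ (∑ i, f i = 1) ∧
      (∀ i, IsIndecModule A ↥(stdIdeal A f i)) ∧
      ∀ i j, i ≠ j → IsEmpty (↥(stdIdeal A f i) ≃ₗ[A] ↥(stdIdeal A f j))) :
    ((∃ (H : Type) (_ : Ring H) (_ : Algebra k H), FiniteDimensional k H ∧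
        (∀ (P : Type) [AddCommGroup P] [Module H P], Module.Projective H P →
          ∀ N : Submodule H P, Module.Projective H ↥N) ∧
        ∃ φ : H →ₐ[k] A, Function.Surjective φ) ↔
      (∃ (m : ℕ) (f : Fin m → A), (∀ i, f i * f i = f i) ∧
        (∀ i j, i ≠ j → f i * f j = 0) ∧ (∑ i, f i = 1) ∧
        (∀ i, IsIndecModule A ↥(stdIdeal A f i)) ∧
        HasStdFiltration A f A ∧ ∀ i, IsSimpleModule A (StdMod A f i))) ∧
    ((∃ (m : ℕ) (f : Fin m → A), (∀ i, f i * f i = f i) ∧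
        (∀ i j, i ≠ j → f i * f j = 0) ∧ (∑ i, f i = 1) ∧
        (∀ i, IsIndecModule A ↥(stdIdeal A f i)) ∧
        HasStdFiltration A f A ∧ ∀ i, IsSimpleModule A (StdMod A f i)) ↔
      (∃ (m : ℕ) (f : Fin m → A), (∀ i, f i * f i = f i) ∧
        (∀ i j, i ≠ j → f i * f j = 0) ∧ (∑ i, f i = 1) ∧
        (∀ i, IsIndecModule A ↥(stdIdeal A f i)) ∧
        HasStdFiltration A f A ∧
        ∀ (M : Type) [AddCommGroup M] [Module A M], Module.Finite A M →
          HasStdFiltration A f M)) := by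
  have hart : IsArtinianRing A := IsArtinianRing.of_finite k A
  have hscal : ScalarOnSimples k A := by
    obtain ⟨m, f, hid, -, hsum, hind, hiso⟩ := hbasic
    exact scalarOnSimples_of_basic hid hsum hind hiso
  have hne_of : ∀ {m : ℕ} {f : Fin m → A}, (∀ i, IsIndecModule A ↥(stdIdeal A f i)) →
      ∀ i, f i ≠ 0 := by
    intro m f hind i h0
    have hnt := (hind i).1
    rw [Submodule.nontrivial_iff_ne_bot] at hnt
    exact hnt (Submodule.span_singleton_eq_bot.mpr h0)
  refine ⟨⟨?_, ?_⟩, ⟨?_, ?_⟩⟩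
  · rintro ⟨H, _, _, _, hher, φ, hφ⟩
    obtain ⟨m, f, hid, horth, hsum, hne, hdir, htriv⟩ := directed_of_hereditary_quotient
      (fun N => hher H inferInstance N) φ hφ hscal
    have hsimp := std_simple_of_directed hid hsum hne hdir htriv
    exact ⟨m, f, hid, horth, hsum, fun i => indec_of_trivial_corner (hid i) (hne i) (htriv i),
      hasStdFiltration_of_simple hid hsum hsimp A, hsimp⟩
  · rintro ⟨m, f, hid, horth, hsum, -, -, hsimp⟩
    obtain ⟨hdir, htriv⟩ := directed_of_std_simple hid horth hscal hsimp
    obtain ⟨H, _, _, hfin, hher, φ, hmul, hone, hsurj⟩ :=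
      hereditaryCover_one hid horth hsum hdir htriv
    refine ⟨H, inferInstance, inferInstance, hfin, hher, AlgHom.ofLinearMap φ hone hmul, ?_⟩
    intro a
    obtain ⟨h, hh⟩ := hsurj a
    exact ⟨h, by rw [one_mul, mul_one] at hh; exact hh⟩
  · rintro ⟨m, f, hid, horth, hsum, hind, hfil, hsimp⟩
    exact ⟨m, f, hid, horth, hsum, hind, hfil, fun M _ _ _ =>
      hasStdFiltration_of_simple hid hsum hsimp M⟩
  · rintro ⟨m, f, hid, horth, hsum, hind, hfil, hall⟩
    exact ⟨m, f, hid, horth, hsum, hind, hfil,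
      std_simple_of_filtration hid horth (hne_of hind) hscal hall⟩
end

section
/- Suppose A is directed (e_j A e_i = 0 whenever j < i), that for all i, j the space e_j A e_i is projective as a left e_jAe_j-module (so A is standardly stratified with respect to the index order), that each corner algebra e_iAe_i is self-injective (injective as a left module over itself), and that for all i, j the space e_j A e_i is a free right e_iAe_i-module. Then for every i, the indecomposable injective left A-module D(e_iA) := Hom_k(e_iA, k), with left A-action (a·φ)(m) = φ(ma), belongs to F(Δ), i.e. it admits a filtration by standard modules; consequently D(e_iA) coincides with the i-th indecomposable summand of the characteristic tilting module of A. -/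
/-!
Write `R_t = e_tAe_t` and `f = e_i`. Directedness makes `fAe_0 ⊕ ⋯ ⊕ fAe_t` a right submodule of
`fA`, on whose top layer `fAe_t` the algebra `A` acts through `R_t`; it also identifies `Δ_t` with
`R_t`, on which `A` acts through `a ↦ e_t a e_t` (`mem_stdTrace_iff`). Since `fAe_t` is free over
`R_t`, and of finite rank (`finite_of_basis`), the right module `fA` has a finite filtration with
factors `R_t`. Taking annihilators in `D(fA)` yields a filtration with factors `D(R_t)`.

It remains to see `D(R_t) ≅ R_t` as left modules, i.e. that `R_t` is Frobenius. Fitting's lemma on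
the indecomposable module `Ae_t` shows that elements of `R_t` are units or nilpotent
(`Corner.isUnit_or_isNilpotent`). Together with self-injectivity this forces any two nonzero left
ideals to meet (`leftIdeal_uniform`), so there is a unique minimal left ideal; it is
one-dimensional because `k` is algebraically closed, and a functional that does not vanish on it is
nondegenerate (`exists_frobenius_form`).

The two parts are combined in `isStdStep_annR`: a nondegenerate functional on `R_t`, extended to
`fA`, generates the corresponding quotient of annihilators and gives its isomorphism with `Δ_t`.
-/
set_option linter.unusedVariables false
set_option maxHeartbeats 1000000

/-! ### Self-injective local algebras are Frobenius -/

/-- Over a left self-injective ring whose elements are units or nilpotent, any two nonzero left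
ideals meet: otherwise the projection `L₁ ⊕ L₂ → L₁` would extend to right multiplication by an
element `c` that fixes `L₁` and kills `L₂`, which is neither a unit nor nilpotent. -/
lemma leftIdeal_uniform {R : Type} [Ring R] (hloc : ∀ c : R, IsUnit c ∨ IsNilpotent c)
    (hinj : Module.Injective R R) (L₁ L₂ : Submodule R R) (h : Disjoint L₁ L₂) :
    L₁ = ⊥ ∨ L₂ = ⊥ := by
  have hf : Function.Injective (L₁.subtype.coprod L₂.subtype) := by
    rw [← LinearMap.ker_eq_bot, LinearMap.ker_eq_bot']
    rintro ⟨x, y⟩ hxy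
    simp only [LinearMap.coprod_apply, Submodule.subtype_apply] at hxy
    have hx : (x : R) ∈ L₂ := by
      rw [eq_neg_of_add_eq_zero_left hxy]; exact L₂.neg_mem y.2
    have hx0 : (x : R) = 0 := Submodule.disjoint_def.1 h _ x.2 hx
    have hy0 : (y : R) = 0 := by simpa [hx0] using hxy
    exact Prod.ext (Subtype.ext hx0) (Subtype.ext hy0)
  obtain ⟨g, hg⟩ := hinj.out (L₁.subtype.coprod L₂.subtype) hf
    (L₁.subtype.comp (LinearMap.fst R L₁ L₂))
  have hgc : ∀ x : R, g x = x * g 1 := fun x => by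
    rw [← smul_eq_mul, ← map_smul, smul_eq_mul, mul_one]
  have h1 : ∀ x ∈ L₁, x * g 1 = x := fun x hx => by
    rw [← hgc]; simpa using hg (⟨x, hx⟩, 0)
  have h2 : ∀ x ∈ L₂, x * g 1 = 0 := fun x hx => by
    rw [← hgc]; simpa using hg (0, ⟨x, hx⟩)
  rcases hloc (g 1) with hu | ⟨m, hm⟩
  · right
    rw [Submodule.eq_bot_iff]
    exact fun x hx => (hu.mul_left_eq_zero).1 (h2 x hx)
  · left
    rw [Submodule.eq_bot_iff]
    intro x hx
    have hp : ∀ p : ℕ, x * g 1 ^ p = x := by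
      intro p
      induction p with
      | zero => simp
      | succ p ih => rw [pow_succ, ← mul_assoc, ih, h1 x hx]
    rw [← hp m, hm, mul_zero]

/-- A finite-dimensional local left self-injective algebra over an algebraically closed field is
Frobenius: it has a functional whose kernel contains no nonzero left ideal. One takes any
functional that does not vanish on the left socle, which is one-dimensional. -/
lemma exists_frobenius_form (k : Type) [Field k] [IsAlgClosed k] {R : Type} [Ring R] [Algebra k R]
    [FiniteDimensional k R] [Nontrivial R] (hloc : ∀ c : R, IsUnit c ∨ IsNilpotent c)
    (hinj : Module.Injective R R) :
    ∃ lam : R →ₗ[k] k, ∀ r : R, (∀ c, lam (c * r) = 0) → r = 0 := by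
  have : IsArtinianRing R := IsArtinianRing.of_finite k R
  obtain ⟨S, hS⟩ := IsAtomic.exists_atom (Submodule R R)
  obtain ⟨s, hsS, hs0⟩ := S.ne_bot_iff.1 hS.1
  have hspan : ∀ y ∈ S, y ≠ 0 → Submodule.span R {y} = S := fun y hy hy0 =>
    (hS.le_iff.1 ((Submodule.span_singleton_le_iff_mem y S).2 hy)).resolve_left
      (by simpa using hy0)
  -- Nilpotent elements kill the socle: if `ν s ≠ 0` then `s = d ν s` with `d ν` nilpotent.
  have hnil : ∀ v : R, IsNilpotent v → v * s = 0 := by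
    intro v hv
    by_contra hvs
    have h1 : s ∈ Submodule.span R {v * s} := by
      rw [hspan (v * s) (S.smul_mem v hsS) hvs]; exact hsS
    obtain ⟨d, hd⟩ := Submodule.mem_span_singleton.1 h1
    have hdv : IsNilpotent (d * v) := by
      refine (hloc _).resolve_left fun hu => ?_
      have hv' : IsUnit v := by
        obtain ⟨w, hw⟩ := hu.exists_left_inv
        exact IsUnit.of_mul_eq_one_right (w * d) (by rw [mul_assoc, hw])
      exact (hv'.not_isNilpotent) hv
    have h2 : (1 - d * v) * s = 0 := by
      rw [sub_mul, one_mul, mul_assoc]; simpa [sub_eq_zero] using hd.symm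
    exact hs0 ((hdv.isUnit_one_sub.mul_right_eq_zero).1 h2)
  have hscal : ∀ c : R, ∃ μ : k, c * s = μ • s := by
    intro c
    obtain ⟨μ, hμ⟩ := spectrum.nonempty_of_isAlgClosed_of_finiteDimensional k c
    refine ⟨μ, ?_⟩
    have h1 := (hloc (algebraMap k R μ - c)).resolve_left (spectrum.mem_iff.1 hμ)
    have h2 := hnil _ h1
    rw [sub_mul, sub_eq_zero] at h2
    rw [← h2, Algebra.smul_def]
  obtain ⟨lam, hlam⟩ := Module.Projective.exists_dual_ne_zero k hs0
  refine ⟨lam, fun r hr => ?_⟩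
  by_contra hr0
  have hmeet : ¬ Disjoint S (Submodule.span R {r}) := fun hd =>
    (leftIdeal_uniform hloc hinj _ _ hd).elim hS.1 (by simpa using hr0)
  have hle : S ≤ Submodule.span R {r} := (IsAtom.not_disjoint_iff_le hS).1 hmeet
  obtain ⟨c, hc⟩ := Submodule.mem_span_singleton.1 (hle hsS)
  exact hlam (by rw [← hc]; exact hr c)

/-- A nondegenerate functional represents all functionals. -/
lemma frobenius_form_surj {k : Type} [Field k] {R : Type} [Ring R] [Algebra k R]
    [FiniteDimensional k R] (lam : R →ₗ[k] k) (h : ∀ r : R, (∀ c, lam (c * r) = 0) → r = 0)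
    (phi : R →ₗ[k] k) : ∃ r, ∀ c, phi c = lam (c * r) := by
  let T : R →ₗ[k] Module.Dual k R :=
    ((LinearMap.mul k R).flip).compr₂ lam
  have hT : Function.Injective T := by
    rw [← LinearMap.ker_eq_bot, LinearMap.ker_eq_bot']
    exact fun r hr => h r fun c => LinearMap.congr_fun hr c
  obtain ⟨r, hr⟩ := (LinearMap.injective_iff_surjective_of_finrank_eq_finrank
    (Subspace.dual_finrank_eq (K := k) (V := R)).symm).1 hT phi
  exact ⟨r, fun c => by rw [← hr]; rfl⟩

/-! ### Corner algebras at primitive idempotents -/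

instance Corner.finiteDimensional {k A : Type} [Field k] [Ring A] [Algebra k A]
    [FiniteDimensional k A] {e : A} {he : e * e = e} : FiniteDimensional k (Corner e he) :=
  Module.Finite.of_injective
    ({ toFun := Subtype.val, map_add' := fun _ _ => rfl, map_smul' := fun _ _ => rfl } :
      Corner e he →ₗ[k] A) Subtype.val_injective

lemma Corner.val_pow_succ {A : Type} [Ring A] {e : A} {he : e * e = e} (c : Corner e he) (m : ℕ) :
    (c ^ (m + 1)).1 = c.1 ^ (m + 1) := by
  induction m with
  | zero => simp
  | succ m ih =>
    rw [pow_succ c, pow_succ c.1, ← ih]; rfl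

/-- Fitting's lemma for right multiplication on the indecomposable module `Ae`: elements of `eAe`
are units or nilpotent. -/
lemma Corner.isUnit_or_isNilpotent (k : Type) {A : Type} [Field k] [Ring A] [Algebra k A]
    [FiniteDimensional k A] {e : A} (he : e * e = e)
    (hind : IsIndecModule A ↥(Submodule.span A {e})) (c : Corner e he) :
    IsUnit c ∨ IsNilpotent c := by
  have : IsArtinianRing A := IsArtinianRing.of_finite k A
  have : IsArtinianRing (Corner e he) := IsArtinianRing.of_finite k _
  have hmem : ∀ x : Submodule.span A {e}, x.1 * c.1 ∈ Submodule.span A {e} := fun x =>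
    Submodule.mem_span_singleton.2 ⟨x.1 * c.1, by rw [smul_eq_mul, mul_assoc, c.2.2]⟩
  let T : Module.End A (Submodule.span A {e}) :=
    { toFun := fun x => ⟨x.1 * c.1, hmem x⟩
      map_add' := fun x y => Subtype.ext (add_mul _ _ _)
      map_smul' := fun a x => Subtype.ext (mul_assoc _ _ _) }
  have hTp : ∀ (m : ℕ) (x : Submodule.span A {e}), ((T ^ m) x).1 = x.1 * c.1 ^ m := by
    intro m
    induction m with
    | zero => simp
    | succ m ih =>
      intro x
      rw [pow_succ', Module.End.mul_apply]
      change ((T ^ m) x).1 * c.1 = _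
      rw [ih, mul_assoc, pow_succ]
  obtain ⟨m, hm⟩ := Filter.eventually_atTop.1 T.eventually_isCompl_ker_pow_range_pow
  have hcompl := hm (m + 1) (Nat.le_succ m)
  let e' : Submodule.span A {e} := ⟨e, Submodule.mem_span_singleton_self e⟩
  have hec : e * c.1 ^ (m + 1) = (c ^ (m + 1)).1 := by
    rw [← Corner.val_pow_succ]; exact (c ^ (m + 1)).2.1
  rcases hind.2 _ _ hcompl with h | h
  · left
    have htop := hcompl.sup_eq_top
    rw [h, bot_sup_eq] at htop
    obtain ⟨x, hx⟩ := LinearMap.range_eq_top.1 htop e'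
    have hx' : x.1 * c.1 ^ (m + 1) = e := by rw [← hTp, hx]
    have hmul : cornEl he x.1 * c ^ (m + 1) = 1 := by
      refine Subtype.ext ?_
      change e * x.1 * e * (c ^ (m + 1)).1 = e
      rw [mul_assoc, (c ^ (m + 1)).2.1, Corner.val_pow_succ, mul_assoc, hx', he]
    exact (isUnit_pow_iff (Nat.succ_ne_zero m)).1 (IsUnit.of_mul_eq_one_right _ hmul)
  · right
    refine ⟨m + 1, Subtype.ext ?_⟩
    have h0 : (T ^ (m + 1)) e' = 0 := by
      have := LinearMap.mem_range_self (T ^ (m + 1)) e'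
      rwa [h, Submodule.mem_bot] at this
    rw [← hec]
    have h1 := hTp (m + 1) e'
    rw [h0] at h1
    exact h1.symm

lemma Corner.nontrivial_of_indec {A : Type} [Ring A] {e : A} (he : e * e = e)
    (hind : IsIndecModule A ↥(Submodule.span A {e})) : Nontrivial (Corner e he) := by
  refine ⟨⟨1, 0, fun h => ?_⟩⟩
  have h0 : e = 0 := congrArg Subtype.val h
  obtain ⟨x, hx⟩ := (nontrivial_iff_exists_ne (0 : Submodule.span A {e})).1 hind.1
  subst h0
  exact hx (Subtype.ext (by simpa using x.2))

/-! ### Filtrations inside a fixed module -/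

/-- `N ≤ N'` with `N'/N` a standard module. -/
def IsStdStep {A : Type} [Ring A] {n : ℕ} (e : Fin n → A) {M : Type} [AddCommGroup M] [Module A M]
    (N N' : Submodule A M) : Prop :=
  N ≤ N' ∧ ∃ i : Fin n,
    Nonempty ((↥N' ⧸ (Submodule.comap N'.subtype N)) ≃ₗ[A] StdMod A e i)

/-- The submodule `N` is reached from `⊥` by finitely many steps with standard factors. -/
def StdReachable {A : Type} [Ring A] {n : ℕ} (e : Fin n → A) {M : Type} [AddCommGroup M]
    [Module A M] (N : Submodule A M) : Prop :=
  Relation.ReflTransGen (IsStdStep e) ⊥ N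

/-- The chain is indexed by `ℕ` and made constant from the last step on, which keeps the factors
free of casts between `Fin` types. -/
lemma hasStdFiltration_of_reachable {A : Type} [Ring A] {n : ℕ} (e : Fin n → A) {M : Type}
    [AddCommGroup M] [Module A M] (h : StdReachable e (⊤ : Submodule A M)) :
    HasStdFiltration A e M := by
  have key : ∀ N : Submodule A M, StdReachable e N → ∃ (r : ℕ) (F : ℕ → Submodule A M),
      F 0 = ⊥ ∧ (∀ t, r ≤ t → F t = N) ∧ ∀ t, t < r → IsStdStep e (F t) (F (t + 1)) := by
    intro N hN
    induction hN with
    | refl => exact ⟨0, fun _ => ⊥, rfl, fun _ _ => rfl, fun t ht => absurd ht (Nat.not_lt_zero t)⟩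
    | @tail N N' _ hstep ih =>
      obtain ⟨r, F, h0, hr, hF⟩ := ih
      refine ⟨r + 1, fun t => if t ≤ r then F t else N', by simp [h0], fun t ht => ?_,
        fun t ht => ?_⟩
      · exact if_neg (by omega)
      · rcases Nat.lt_succ_iff_lt_or_eq.1 ht with h | h
        · simp only [if_pos h.le, if_pos (Nat.succ_le_of_lt h)]
          exact hF t h
        · subst h
          simpa [hr t le_rfl] using hstep
  obtain ⟨r, F, h0, hr, hF⟩ := key ⊤ h
  refine ⟨r, fun t => F t, ?_, h0, hr r le_rfl, fun t => (hF t t.2).2⟩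
  have hmono : Monotone F := by
    refine monotone_nat_of_le_succ fun t => ?_
    rcases lt_or_ge t r with h | h
    · exact (hF t h).1
    · rw [hr t h, hr (t + 1) (by omega)]
  exact fun a b hab => hmono hab

/-- A submodule `N'` that is generated modulo `N` by one element `L` on which `Ae_t` acts through
`Δ_t`, faithfully modulo `N`, gives a step with factor `Δ_t`. -/
lemma isStdStep_of_generator {A : Type} [Ring A] {n : ℕ} (e : Fin n → A) {M : Type}
    [AddCommGroup M] [Module A M] {N N' : Submodule A M} (hle : N ≤ N') (t : Fin n) (L : M)
    (hL : L ∈ N') (hker : ∀ a ∈ stdIdeal A e t, a • L ∈ N ↔ a ∈ stdTrace A e t)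
    (hsurj : ∀ φ ∈ N', ∃ a ∈ stdIdeal A e t, a • L - φ ∈ N) : IsStdStep e N N' := by
  refine ⟨hle, t, ?_⟩
  let q := (Submodule.comap N'.subtype N).mkQ
  let g : ↥(stdIdeal A e t) →ₗ[A] _ :=
    (q.comp (LinearMap.toSpanSingleton A _ (⟨L, hL⟩ : N'))).comp (stdIdeal A e t).subtype
  have hk : LinearMap.ker g = Submodule.comap (stdIdeal A e t).subtype (stdTrace A e t) := by
    ext a
    rw [LinearMap.mem_ker, Submodule.mem_comap, Submodule.subtype_apply, ← hker a.1 a.2]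
    change q (a.1 • ⟨L, hL⟩) = 0 ↔ _
    rw [Submodule.mkQ_apply, Submodule.Quotient.mk_eq_zero]
    rfl
  have hs : Function.Surjective g := by
    intro y
    obtain ⟨φ, rfl⟩ := Submodule.mkQ_surjective _ y
    obtain ⟨a, ha, h⟩ := hsurj φ.1 φ.2
    refine ⟨⟨a, ha⟩, ?_⟩
    change q (a • ⟨L, hL⟩) = q φ
    rw [← sub_eq_zero, ← map_sub, Submodule.mkQ_apply, Submodule.Quotient.mk_eq_zero]
    exact h
  exact ⟨(g.quotKerEquivOfSurjective hs).symm.trans (Submodule.quotEquivOfEq _ _ hk)⟩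

/-! ### Annihilators in the dual of a right ideal -/

section Dual

variable {k : Type} [Field k] {A : Type} [Ring A] [Algebra k A]

/-- The annihilator in `D(fA)` of a subset `X` of `fA` stable under right multiplication. -/
def annR (k : Type) [Field k] {A : Type} [Ring A] [Algebra k A] {f : A} (X : Set (RIdeal f))
    (hX : ∀ (a : A), ∀ x ∈ X, rmulR k a x ∈ X) : Submodule A (RIdeal (A := A) f →ₗ[k] k) where
  carrier := {φ | ∀ x ∈ X, φ x = 0}
  add_mem' := fun {φ ψ} hφ hψ x hx => by
    change φ x + ψ x = 0
    rw [hφ x hx, hψ x hx, add_zero]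
  zero_mem' := fun _ _ => rfl
  smul_mem' := fun a φ hφ x hx => hφ _ (hX a x hx)

variable {n : ℕ} (e : Fin n → A)

/-- In a directed algebra, the trace submodule defining `Δ_t` consists of those elements of
`Ae_t` that `e_t` kills, so that `Δ_t` is `e_tAe_t` as a vector space. -/
lemma mem_stdTrace_iff (hsum : ∑ i, e i = 1)
    (hdir : IsDirectedAlgebra A e) (t : Fin n) {a : A} (ha : a * e t = a) :
    a ∈ stdTrace A e t ↔ e t * a = 0 := by
  constructor
  · intro h
    have key : ∀ c : A, e t * (c * a) = 0 := by
      clear ha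
      induction h using Submodule.span_induction with
      | mem x hx =>
        obtain ⟨l, hl, b, rfl⟩ := hx
        intro c
        rw [mul_assoc (e l), ← mul_assoc c, ← mul_assoc (e t), ← mul_assoc (e t), hdir l t hl c,
          zero_mul]
      | zero => simp
      | add x y _ _ hx hy => exact fun c => by rw [mul_add, mul_add, hx, hy, add_zero]
      | smul d x _ hx => exact fun c => by rw [smul_eq_mul, ← mul_assoc c]; exact hx _
    simpa using key 1
  · intro h
    have hs : a = ∑ j, e j * a := by rw [← Finset.sum_mul, hsum, one_mul]
    rw [hs]
    refine Submodule.sum_mem _ fun j _ => ?_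
    rcases lt_trichotomy j t with hj | hj | hj
    · rw [← ha, ← mul_assoc, hdir t j hj a]; exact Submodule.zero_mem _
    · rw [hj, h]; exact Submodule.zero_mem _
    · exact Submodule.subset_span ⟨j, hj, a, by rw [mul_assoc, ha]⟩

/-- The basic step. Suppose `X ⊆ fA` is obtained from `X'` by adding a copy `b(e_tAe_t)` of the
right module `e_tAe_t`, and `lam` is a nondegenerate functional on `e_tAe_t` that extends along
`b` to a functional `Lam` on `fA` vanishing on `X'`. Then `a ↦ a • Lam` induces an isomorphism of
`Δ_t` with the quotient of annihilators `X'^⊥ / X^⊥`. -/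
lemma isStdStep_annR [FiniteDimensional k A] (hidem : ∀ i, e i * e i = e i) (hsum : ∑ i, e i = 1)
    (hdir : IsDirectedAlgebra A e) (t : Fin n) {f : A} (X' X : Set (RIdeal f))
    (hX' : ∀ (a : A), ∀ x ∈ X', rmulR k a x ∈ X') (hX : ∀ (a : A), ∀ x ∈ X, rmulR k a x ∈ X)
    (hle : X' ⊆ X) (b : RIdeal f) (hbX : b ∈ X)
    (hdec : ∀ x ∈ X, ∃ x' ∈ X', ∃ c : Corner (e t) (hidem t), x = x' + rmulR k c.1 b)
    (lam : Corner (e t) (hidem t) →ₗ[k] k)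
    (hlam : ∀ r, (∀ c, lam (c * r) = 0) → r = 0)
    (Lam : RIdeal (A := A) f →ₗ[k] k) (hLam' : ∀ x ∈ X', Lam x = 0)
    (hLam : ∀ c : Corner (e t) (hidem t), Lam (rmulR k c.1 b) = lam c) :
    IsStdStep e (annR k X hX) (annR k X' hX') := by
  have hmem : ∀ a : stdIdeal A e t, a.1 * e t = a.1 := by
    intro a
    obtain ⟨x, hx⟩ := Submodule.mem_span_singleton.1 a.2
    rw [← hx, smul_eq_mul, mul_assoc, hidem]
  have hact : ∀ a : A, a * e t = a → ∀ c : Corner (e t) (hidem t),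
      (a • Lam) (rmulR k c.1 b) = lam (c * cornEl (hidem t) a) := by
    intro a ha c
    rw [← hLam]
    refine congrArg Lam (Subtype.ext ?_)
    change b.1 * c.1 * a = b.1 * (c.1 * (e t * a * e t))
    rw [mul_assoc (e t), ha, ← mul_assoc c.1, c.2.2, mul_assoc]
  refine isStdStep_of_generator e (fun φ hφ x hx => hφ x (hle hx)) t Lam hLam' ?_ ?_
  · intro a₀ ha₀
    obtain ⟨a, rfl⟩ : ∃ a : stdIdeal A e t, a.1 = a₀ := ⟨⟨a₀, ha₀⟩, rfl⟩
    rw [mem_stdTrace_iff e hsum hdir t (hmem a)]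
    change (∀ x ∈ X, (a.1 • Lam) x = 0) ↔ _
    constructor
    · intro h
      have h0 : cornEl (hidem t) a.1 = 0 := hlam _ fun c => by
        rw [← hact a.1 (hmem a)]; exact h _ (hX _ _ hbX)
      have h1 : e t * a.1 * e t = 0 := congrArg Subtype.val h0
      rwa [mul_assoc, hmem a] at h1
    · intro h x hx
      obtain ⟨x', hx', c, rfl⟩ := hdec x hx
      have h0 : cornEl (hidem t) a.1 = 0 := Subtype.ext (by
        change e t * a.1 * e t = 0
        rw [h, zero_mul])
      have h1 : (a.1 • Lam) x' = 0 := hLam' _ (hX' _ _ hx')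
      rw [map_add, hact a.1 (hmem a), h0, mul_zero, map_zero, h1, add_zero]
  · intro φ hφ
    let psi : Corner (e t) (hidem t) →ₗ[k] k :=
      { toFun := fun c => φ (rmulR k c.1 b)
        map_add' := fun c d => by
          rw [← map_add]; exact congrArg φ (Subtype.ext (mul_add _ _ _))
        map_smul' := fun c d => by
          rw [← map_smul]; exact congrArg φ (Subtype.ext (mul_smul_comm _ _ _)) }
    obtain ⟨r, hr⟩ := frobenius_form_surj lam hlam psi
    refine ⟨r.1, Submodule.mem_span_singleton.2 ⟨r.1, r.2.2⟩, ?_⟩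
    change ∀ x ∈ X, (r.1 • Lam) x - φ x = 0
    intro x hx
    obtain ⟨x', hx', c, rfl⟩ := hdec x hx
    have h1 : (r.1 • Lam) x' = 0 := hLam' _ (hX' _ _ hx')
    have h2 : cornEl (hidem t) r.1 = r := Subtype.ext (by
      change e t * r.1 * e t = r.1
      rw [r.2.1, r.2.2])
    have h3 : φ (rmulR k c.1 b) = lam (c * r) := hr c
    rw [map_add, map_add, h1, hφ x' hx', hact r.1 r.2.2, h2, h3, sub_self]

/-! ### The filtration of `fA` -/

/-- The part `fAe_0 ⊕ ⋯ ⊕ fAe_{m-1}` of `fA`. -/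
def lowPart (f : A) (m : ℕ) : Set (RIdeal f) := {x | ∀ j : Fin n, m ≤ j → x.1 * e j = 0}

lemma lowPart_stable (hsum : ∑ i, e i = 1) (hdir : IsDirectedAlgebra A e) {f : A} (m : ℕ)
    (a : A) : ∀ x ∈ lowPart e f m, rmulR k a x ∈ lowPart e f m := by
  intro x hx j hj
  change x.1 * a * e j = 0
  have hs : x.1 = ∑ l, x.1 * e l := by rw [← Finset.mul_sum, hsum, mul_one]
  rw [hs, Finset.sum_mul, Finset.sum_mul]
  refine Finset.sum_eq_zero fun l _ => ?_
  rcases lt_or_ge (l : ℕ) m with hl | hl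
  · rw [mul_assoc, mul_assoc, ← mul_assoc (e l), hdir j l (Fin.lt_def.2 (by omega)) a, mul_zero]
  · rw [hx l hl, zero_mul, zero_mul]

/-- The component `x e` of `x ∈ fA` in `fAe`. -/
def compAt {f : A} (e' : A) (he' : e' * e' = e') (x : RIdeal f) : Sandwich f e' :=
  ⟨x.1 * e', by rw [← mul_assoc, x.2], by rw [mul_assoc, he']⟩

/-- The elements of `fAe_0 ⊕ ⋯ ⊕ fAe_t` whose coordinates in `fAe_t` with respect to the basis `B`
are supported in `s`. -/
def partialPart (hidem : ∀ i, e i * e i = e i) {f : A} (t : Fin n) {ι : Type}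
    (B : Module.Basis ι (Corner (e t) (hidem t))ᵐᵒᵖ (Sandwich f (e t))) (s : Finset ι) :
    Set (RIdeal f) :=
  {x | x ∈ lowPart e f (t + 1) ∧ ∀ l, l ∉ s → B.repr (compAt (e t) (hidem t) x) l = 0}

/-- On `fAe_0 ⊕ ⋯ ⊕ fAe_t`, taking the component at `t` turns right multiplication by `a` into
right multiplication by `e_t a e_t`. -/
lemma compAt_rmulR (hidem : ∀ i, e i * e i = e i) (hsum : ∑ i, e i = 1)
    (hdir : IsDirectedAlgebra A e) {f : A} (t : Fin n) (a : A) {x : RIdeal f}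
    (hx : x ∈ lowPart e f (t + 1)) :
    compAt (e t) (hidem t) (rmulR k a x) =
      MulOpposite.op (cornEl (hidem t) a) • compAt (e t) (hidem t) x := by
  refine Subtype.ext ?_
  change x.1 * a * e t = x.1 * e t * (e t * a * e t)
  have hs : x.1 = ∑ l, x.1 * e l := by rw [← Finset.mul_sum, hsum, mul_one]
  conv_lhs => rw [hs, Finset.sum_mul, Finset.sum_mul]
  rw [Finset.sum_eq_single t]
  · simp only [mul_assoc]
    rw [← mul_assoc (e t) (e t), hidem]
  · intro l _ hl
    rcases lt_or_gt_of_ne hl with h | h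
    · rw [mul_assoc, mul_assoc, ← mul_assoc (e l), hdir t l h a, mul_zero]
    · rw [hx l (Fin.lt_def.1 h), zero_mul, zero_mul]
  · simp

lemma partialPart_stable (hidem : ∀ i, e i * e i = e i) (hsum : ∑ i, e i = 1)
    (hdir : IsDirectedAlgebra A e) {f : A} (t : Fin n) {ι : Type}
    (B : Module.Basis ι (Corner (e t) (hidem t))ᵐᵒᵖ (Sandwich f (e t))) (s : Finset ι) (a : A) :
    ∀ x ∈ partialPart e hidem t B s, rmulR k a x ∈ partialPart e hidem t B s := by
  intro x hx
  refine ⟨lowPart_stable e hsum hdir _ a x hx.1, fun l hl => ?_⟩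
  rw [compAt_rmulR e hidem hsum hdir t a hx.1, map_smul, Finsupp.smul_apply, hx.2 l hl, smul_zero]

/-- A basis of `fAe` over `eAe` is linearly independent over `k` and therefore finite. -/
lemma finite_of_basis (k : Type) [Field k] {A : Type} [Ring A] [Algebra k A]
    [FiniteDimensional k A] {e f : A} (he : e * e = e) [Nontrivial (Corner e he)] {ι : Type}
    (B : Module.Basis ι (Corner e he)ᵐᵒᵖ (Sandwich f e)) : Finite ι := by
  have hli : LinearIndependent k (fun l => (B l).1) := by
    rw [linearIndependent_iff']
    intro s g hg l hl
    let v : Sandwich f e →+ A :=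
      { toFun := Subtype.val, map_zero' := rfl, map_add' := fun _ _ => rfl }
    have h0 : ∑ l ∈ s, MulOpposite.op (g l • (1 : Corner e he)) • B l = 0 := by
      apply Subtype.val_injective
      change v _ = 0
      rw [map_sum, ← hg]
      refine Finset.sum_congr rfl fun l _ => ?_
      change (B l).1 * (g l • e) = _
      rw [mul_smul_comm, (B l).2.2]
    have h1 := linearIndependent_iff'.1 B.linearIndependent s _ h0 l hl
    have h2 : g l • (1 : Corner e he) = 0 := MulOpposite.op_injective h1
    exact (smul_eq_zero.1 h2).resolve_right one_ne_zero
  exact hli.finite_of_isNoetherian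

lemma compAt_add {f e' : A} (he' : e' * e' = e') (x y : RIdeal f) :
    compAt e' he' (x + y) = compAt e' he' x + compAt e' he' y := Subtype.ext (add_mul _ _ _)

lemma compAt_smul {f e' : A} (he' : e' * e' = e') (c : k) (x : RIdeal f) :
    compAt e' he' (c • x) =
      MulOpposite.op (c • (1 : Corner e' he')) • compAt e' he' x := by
  refine Subtype.ext ?_
  change c • x.1 * e' = x.1 * e' * (c • e')
  rw [mul_smul_comm, smul_mul_assoc, mul_assoc, he']

lemma compAt_rmulR_basis {f e' : A} (he' : e' * e' = e') (b : Sandwich f e') (c : Corner e' he') :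
    compAt e' he' (rmulR k c.1 (⟨b.1, b.2.1⟩ : RIdeal f)) = MulOpposite.op c • b :=
  Subtype.ext (by
    change b.1 * c.1 * e' = b.1 * c.1
    rw [mul_assoc, c.2.2])

/-- Adding one basis element to the support is one step with factor `Δ_t`; the functional `Lam` is
`lam` applied to the new coordinate. -/
lemma isStdStep_insert [FiniteDimensional k A] (hidem : ∀ i, e i * e i = e i)
    (horth : ∀ i j, i ≠ j → e i * e j = 0) (hsum : ∑ i, e i = 1)
    (hdir : IsDirectedAlgebra A e) {f : A} (t : Fin n) {ι : Type} [DecidableEq ι]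
    (B : Module.Basis ι (Corner (e t) (hidem t))ᵐᵒᵖ (Sandwich f (e t)))
    (lam : Corner (e t) (hidem t) →ₗ[k] k) (hlam : ∀ r, (∀ c, lam (c * r) = 0) → r = 0)
    (s : Finset ι) (l : ι) (hl : l ∉ s) :
    IsStdStep e
      (annR k _ (partialPart_stable e hidem hsum hdir t B (insert l s)))
      (annR k _ (partialPart_stable e hidem hsum hdir t B s)) := by
  let b : RIdeal f := ⟨(B l).1, (B l).2.1⟩
  have hb : ∀ c : Corner (e t) (hidem t),
      B.repr (compAt (e t) (hidem t) (rmulR k c.1 b)) = Finsupp.single l (MulOpposite.op c) := by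
    intro c
    rw [compAt_rmulR_basis, map_smul, B.repr_self, Finsupp.smul_single, smul_eq_mul, mul_one]
  have hblow : ∀ c : Corner (e t) (hidem t), rmulR k c.1 b ∈ lowPart e f (t + 1) := by
    intro c j hj
    change (B l).1 * c.1 * e j = 0
    have hne : t ≠ j := by rintro rfl; omega
    rw [← c.2.2, mul_assoc, mul_assoc, horth t j hne, mul_zero, mul_zero]
  have hb1 : rmulR k (1 : Corner (e t) (hidem t)).1 b = b := Subtype.ext (B l).2.2
  let Lam : RIdeal (A := A) f →ₗ[k] k :=
    { toFun := fun x => lam (B.repr (compAt (e t) (hidem t) x) l).unop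
      map_add' := fun x y => by
        rw [compAt_add, map_add, Finsupp.add_apply, MulOpposite.unop_add, map_add]
      map_smul' := fun c x => by
        rw [compAt_smul, map_smul, Finsupp.smul_apply, smul_eq_mul, MulOpposite.unop_mul,
          MulOpposite.unop_op, mul_smul_comm, mul_one, map_smul, RingHom.id_apply] }
  refine isStdStep_annR e hidem hsum hdir t _ _ _ _ ?_ b ?_ ?_ lam hlam Lam ?_ ?_
  · exact fun x hx => ⟨hx.1, fun m hm => hx.2 m fun h => hm (Finset.mem_insert_of_mem h)⟩
  · rw [← hb1]
    refine ⟨hblow 1, fun m hm => ?_⟩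
    rw [hb, Finsupp.single_eq_of_ne]
    rintro rfl
    exact hm (Finset.mem_insert_self _ _)
  · intro x hx
    let c := (B.repr (compAt (e t) (hidem t) x) l).unop
    have hx' : x = (x + rmulR k (-c).1 b) + rmulR k c.1 b := by
      refine Subtype.ext ?_
      change x.1 = x.1 + b.1 * -c.1 + b.1 * c.1
      rw [mul_neg]; abel
    refine ⟨_, ⟨fun j hj => ?_, fun m hm => ?_⟩, c, hx'⟩
    · change (x.1 + (rmulR k (-c).1 b).1) * e j = 0
      rw [add_mul, hx.1 j hj, hblow (-c) j hj, add_zero]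
    · rw [compAt_add, map_add, Finsupp.add_apply, hb]
      by_cases hml : m = l
      · subst hml
        rw [Finsupp.single_eq_same, MulOpposite.op_neg, MulOpposite.op_unop, add_neg_cancel]
      · rw [Finsupp.single_eq_of_ne hml, hx.2 m (by simp [hml, hm]), add_zero]
  · intro x hx
    change lam (B.repr (compAt (e t) (hidem t) x) l).unop = 0
    rw [hx.2 l hl, MulOpposite.unop_zero, map_zero]
  · intro c
    change lam (B.repr (compAt (e t) (hidem t) (rmulR k c.1 b)) l).unop = lam c
    rw [hb, Finsupp.single_eq_same, MulOpposite.unop_op]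

lemma annR_congr {f : A} {X Y : Set (RIdeal f)} (h : X = Y)
    (hX : ∀ (a : A), ∀ x ∈ X, rmulR k a x ∈ X) (hY : ∀ (a : A), ∀ x ∈ Y, rmulR k a x ∈ Y) :
    annR k X hX = annR k Y hY := by
  subst h; rfl

/-- Passing from `fAe_0 ⊕ ⋯ ⊕ fAe_t` to `fAe_0 ⊕ ⋯ ⊕ fAe_{t-1}` enlarges the annihilator by
finitely many steps with factor `Δ_t`, one for each basis element of `fAe_t`. -/
lemma reachable_lowPart [FiniteDimensional k A] (hidem : ∀ i, e i * e i = e i)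
    (horth : ∀ i j, i ≠ j → e i * e j = 0) (hsum : ∑ i, e i = 1)
    (hdir : IsDirectedAlgebra A e) {f : A} (t : Fin n) {ι : Type} [Finite ι]
    (B : Module.Basis ι (Corner (e t) (hidem t))ᵐᵒᵖ (Sandwich f (e t)))
    (lam : Corner (e t) (hidem t) →ₗ[k] k) (hlam : ∀ r, (∀ c, lam (c * r) = 0) → r = 0)
    (h : StdReachable e (annR k _ (lowPart_stable e hsum hdir (f := f) (t + 1)))) :
    StdReachable e (annR k _ (lowPart_stable e hsum hdir (f := f) t)) := by
  classical
  have := Fintype.ofFinite ι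
  have huniv : partialPart e hidem t B Finset.univ = lowPart e f (t + 1) :=
    Set.ext fun x => ⟨fun hx => hx.1, fun hx => ⟨hx, fun l hl => absurd (Finset.mem_univ l) hl⟩⟩
  have hempty : partialPart e hidem t B ∅ = lowPart e f t := by
    ext x
    constructor
    · rintro ⟨h1, h2⟩ j hj
      rcases Nat.eq_or_lt_of_le hj with h | h
      · obtain rfl : t = j := Fin.ext h
        have h0 : B.repr (compAt (e t) (hidem t) x) = 0 :=
          Finsupp.ext fun l => h2 l (Finset.notMem_empty l)
        exact congrArg Subtype.val ((map_eq_zero_iff _ B.repr.injective).1 h0)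
      · exact h1 j h
    · intro hx
      refine ⟨fun j hj => hx j (by omega), fun l _ => ?_⟩
      have h0 : compAt (e t) (hidem t) x = 0 := Subtype.ext (hx t le_rfl)
      rw [h0, map_zero, Finsupp.zero_apply]
  have hchain : ∀ s : Finset ι, Relation.ReflTransGen (IsStdStep e)
      (annR k _ (partialPart_stable e hidem hsum hdir t B s))
      (annR k _ (partialPart_stable e hidem hsum hdir t B ∅)) := by
    intro s
    induction s using Finset.induction_on with
    | empty => exact Relation.ReflTransGen.refl
    | insert l s hl ih =>
      exact Relation.ReflTransGen.head
        (isStdStep_insert e hidem horth hsum hdir t B lam hlam s l hl) ih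
  have hfin := hchain Finset.univ
  rw [annR_congr huniv _ (lowPart_stable e hsum hdir _),
    annR_congr hempty _ (lowPart_stable e hsum hdir _)] at hfin
  exact Relation.ReflTransGen.trans h hfin

end Dual

/-- Suppose the basic finite-dimensional algebra `A` is directed, each
`e_j A e_i` is a projective left `e_jAe_j`-module (so `A` is standardly stratified), each corner
algebra `e_iAe_i` is self-injective, and each `e_j A e_i` is a free right `e_iAe_i`-module.
Then each dual `D(e_iA) = Hom_k(e_iA, k)` (with `A`-action `(a • φ) m = φ (m * a)`), which is
the indecomposable injective module `I_i`, admits a filtration by standard modules, i.e. it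
belongs to `F(Δ)`. -/
theorem statement9
    (k : Type) [Field k] [IsAlgClosed k]
    (A : Type) [Ring A] [Algebra k A] [FiniteDimensional k A]
    {n : ℕ} (e : Fin n → A)
    (hidem : ∀ i, e i * e i = e i)
    (horth : ∀ i j, i ≠ j → e i * e j = 0)
    (hsum : ∑ i, e i = 1)
    (hprim : ∀ i, IsIndecModule A ↥(stdIdeal A e i))
    (hbasic : ∀ i j, i ≠ j → IsEmpty (↥(stdIdeal A e i) ≃ₗ[A] ↥(stdIdeal A e j)))
    (hdir : IsDirectedAlgebra A e)
    (hproj : ∀ i j, Module.Projective (Corner (e j) (hidem j)) (Sandwich (e j) (e i)))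
    (hselfinj : ∀ i, Module.Injective (Corner (e i) (hidem i)) (Corner (e i) (hidem i)))
    (hfree : ∀ i j, Module.Free (Corner (e i) (hidem i))ᵐᵒᵖ (Sandwich (e j) (e i)))
    (i : Fin n) :
    HasStdFiltration A e (RIdeal (A := A) (e i) →ₗ[k] k) := by
  have hform : ∀ t, ∃ lam : Corner (e t) (hidem t) →ₗ[k] k,
      ∀ r, (∀ c, lam (c * r) = 0) → r = 0 := fun t =>
    have := Corner.nontrivial_of_indec (hidem t) (hprim t)
    exists_frobenius_form k (Corner.isUnit_or_isNilpotent k (hidem t) (hprim t)) (hselfinj t)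
  have hreach : ∀ d m : ℕ, m + d = n →
      StdReachable e (annR k _ (lowPart_stable e hsum hdir (f := e i) m)) := by
    intro d
    induction d with
    | zero =>
      intro m hm
      have hbot : annR k _ (lowPart_stable e hsum hdir (f := e i) m) = ⊥ := by
        rw [Submodule.eq_bot_iff]
        exact fun φ hφ => LinearMap.ext fun x => hφ x fun j hj => absurd j.2 (by omega)
      rw [hbot]
      exact Relation.ReflTransGen.refl
    | succ d ih =>
      intro m hm
      obtain ⟨t, rfl⟩ : ∃ t : Fin n, (t : ℕ) = m := ⟨⟨m, by omega⟩, rfl⟩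
      have := Corner.nontrivial_of_indec (hidem t) (hprim t)
      have := hfree t i
      obtain ⟨lam, hlam⟩ := hform t
      let B := Module.Free.chooseBasis (Corner (e t) (hidem t))ᵐᵒᵖ (Sandwich (e i) (e t))
      have := finite_of_basis k (hidem t) B
      exact reachable_lowPart e hidem horth hsum hdir t B lam hlam (ih (t + 1) (by omega))
  have htop : annR k _ (lowPart_stable e hsum hdir (f := e i) 0) = ⊤ := by
    rw [eq_top_iff]
    intro φ _ x hx
    have h0 : x = 0 := Subtype.ext (by
      change x.1 = 0
      rw [← mul_one x.1, ← hsum, Finset.mul_sum]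
      exact Finset.sum_eq_zero fun j _ => hx j (Nat.zero_le _))
    rw [h0, map_zero]
  exact hasStdFiltration_of_reachable e (htop ▸ hreach n 0 (by omega))
end

section
/- Let A be a finite-dimensional algebra over a field k and let f be an idempotent of A with (1−f) A f = 0 (this holds when f is the sum of the identity idempotents of an upward-closed full subcategory, i.e. a co-ideal, of a finite directed category). Let V and V' be finitely generated left A-modules with (1−f)·V = 0. Then for every m ≥ 0 there is a k-linear isomorphism Ext^m_A(V, V') ≅ Ext^m_{fAf}(fV, fV'); in particular Hom_A(V, V') ≅ Hom_{fAf}(fV, fV'). -/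
/-!
Since `(1 - f) A f = 0`, the map `a ↦ f a f` is a ring homomorphism `A → fAf`. Letting `A` act
through it turns an `fAf`-module `W` into an `A`-module, and this inflation functor is left
adjoint to `M ↦ fM` (`inflationAdjunction`): `f` is the identity on an inflated module, so every
`A`-linear map from it to `M` takes values in `fM`. Both functors are exact, so inflation also
preserves projectives. Hence a projective resolution `P` of `fV` inflates to one of the inflation
of `fV`, which is `V` because `(1 - f) V = 0` (`inflationCornerIso`), and the adjunction identifies
the complexes `Hom_A(P, V')` and `Hom_{fAf}(P, fV')`, whose cohomologies are the two Ext groups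
(`nonempty_ext_iso_of_adjunction`).
-/

set_option linter.unusedVariables false
set_option maxHeartbeats 1000000

/-! ### Ext and adjunctions between exact functors -/

section ExtAdjunction

open CategoryTheory

/-- If `G ⊣ F` with `F` a `k`-linear functor and `G` exact and preserving projectives, then `G`
carries a projective resolution `P` of `X` to one of `G X`, and `Hom(G P, Y) ≅ Hom(P, F Y)` as
complexes. -/
theorem nonempty_ext_iso_of_adjunction {k : Type} [Ring k]
    {C D : Type 1} [Category.{0} C] [Category.{0} D] [Abelian C] [Abelian D]
    [Linear k C] [Linear k D] [EnoughProjectives C] [EnoughProjectives D]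
    {G : C ⥤ D} {F : D ⥤ C} (adj : G ⊣ F) [F.Additive] [F.Linear k] [G.Additive]
    [G.PreservesProjectiveObjects] [G.PreservesHomology] (X : C) (Y : D) (n : ℕ) :
    Nonempty (((Ext k D n).obj (Opposite.op (G.obj X))).obj Y ≅
      ((Ext k C n).obj (Opposite.op X)).obj (F.obj Y)) := by
  let P : ProjectiveResolution X := projectiveResolution X
  let homIso (Z : C) : (G.obj Z ⟶ Y) ≃ₗ[k] (Z ⟶ F.obj Y) :=
    { adj.homEquiv Z Y with
      map_add' := fun a b => by simp [Adjunction.homEquiv_unit]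
      map_smul' := fun c a => by simp [Adjunction.homEquiv_unit, F.map_smul] }
  let cplxIso : (G.mapProjectiveResolution P).complex.linearYonedaObj k Y ≅
      P.complex.linearYonedaObj k (F.obj Y) :=
    HomologicalComplex.Hom.isoOfComponents (fun i => (homIso (P.complex.X i)).toModuleIso)
      (fun i j _ => ModuleCat.hom_ext (LinearMap.ext fun g =>
        (adj.homEquiv_naturality_left (P.complex.d j i) g).symm))
  exact ⟨(G.mapProjectiveResolution P).isoExt n Y ≪≫
    (HomologicalComplex.homologyFunctor _ _ n).mapIso cplxIso ≪≫ (P.isoExt n (F.obj Y)).symm⟩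

end ExtAdjunction

/-! ### Inflation along `A → fAf` and its right adjoint `M ↦ fM` -/

section CornerAdjunction

open CategoryTheory

variable {A : Type} [Ring A] {f : A} (hf : f * f = f)

/-- The condition `(1 - f) A f = 0` says that `f` acts as the identity on the left of `A f`. -/
theorem f_mul_mul_f (h : ∀ a : A, (1 - f) * a * f = 0) (a : A) : f * a * f = a * f := by
  have h1 := h a
  rw [sub_mul, sub_mul, one_mul, sub_eq_zero] at h1
  exact h1.symm

/-- The map `a ↦ f a f`, a ring homomorphism `A → fAf` because `(1 - f) A f = 0`. -/
def toCorner (h : ∀ a : A, (1 - f) * a * f = 0) : A →+* Corner f hf where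
  toFun := cornEl hf
  map_one' := Subtype.ext (by
    change f * 1 * f = f
    rw [mul_one, hf])
  map_mul' a b := Subtype.ext (by
    change f * (a * b) * f = f * a * f * (f * b * f)
    rw [f_mul_mul_f h, f_mul_mul_f h, f_mul_mul_f h, mul_assoc a f, ← mul_assoc f b,
      f_mul_mul_f h, mul_assoc])
  map_zero' := Subtype.ext (by
    change f * 0 * f = 0
    simp)
  map_add' a b := Subtype.ext (by
    change f * (a + b) * f = f * a * f + f * b * f
    rw [mul_add, add_mul])

/-- The `fAf`-linear map `fM → fN` induced by an `A`-linear map `M → N`. -/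
def cornerModMap {M N : Type} [AddCommGroup M] [Module A M] [AddCommGroup N] [Module A N]
    (g : M →ₗ[A] N) : CornerMod f hf M →ₗ[Corner f hf] CornerMod f hf N where
  toFun m := ⟨g m.1, by rw [← map_smul, m.2]⟩
  map_add' x y := Subtype.ext (map_add g x.1 y.1)
  map_smul' c x := Subtype.ext (map_smul g c.1 x.1)

/-- The functor `M ↦ fM` from left `A`-modules to left `fAf`-modules. -/
def cornerFunctor : ModuleCat.{0} A ⥤ ModuleCat.{0} (Corner f hf) where
  obj M := ModuleCat.of (Corner f hf) (CornerMod f hf M)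
  map g := ModuleCat.ofHom (cornerModMap hf g.hom)

/-- The functor that lets `A` act on a left `fAf`-module through `a ↦ f a f`. -/
noncomputable abbrev inflation (h : ∀ a : A, (1 - f) * a * f = 0) :
    ModuleCat.{0} (Corner f hf) ⥤ ModuleCat.{0} A :=
  ModuleCat.restrictScalars (toCorner hf h)

instance : (cornerFunctor hf).Additive where
  map_add := rfl

instance {k : Type} [Field k] [Algebra k A] : (cornerFunctor hf).Linear k where
  map_smul {M N} g c := by
    ext x
    refine Subtype.ext ?_
    change algebraMap k A c • g.hom x.1 = (c • f) • g.hom x.1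
    have hx : f • g.hom x.1 = g.hom x.1 := by rw [← map_smul, x.2]
    conv_lhs => rw [← hx, smul_smul, ← Algebra.smul_def]

instance : (cornerFunctor hf).PreservesEpimorphisms where
  preserves {M N} g hg := by
    rw [ModuleCat.epi_iff_surjective] at hg ⊢
    intro y
    obtain ⟨x, hx⟩ := hg y.1
    refine ⟨⟨f • x, by rw [smul_smul, hf]⟩, Subtype.ext ?_⟩
    change g.hom (f • x) = y.1
    have hx' : g.hom x = y.1 := hx
    rw [map_smul, hx', y.2]

theorem cornEl_val (a : Corner f hf) : cornEl hf a.1 = a :=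
  Subtype.ext (by
    change f * a.1 * f = a.1
    rw [a.2.1, a.2.2])

/-- `f` acts as the identity on an inflated module, so an `A`-linear map out of it lands in the
part of the target fixed by `f`; this is the adjunction between inflation and `M ↦ fM`. -/
noncomputable def inflationAdjunction (h : ∀ a : A, (1 - f) * a * f = 0) :
    inflation hf h ⊣ cornerFunctor hf :=
  Adjunction.mkOfHomEquiv
    { homEquiv := fun W M =>
        { toFun := fun g => ModuleCat.ofHom (Y := CornerMod f hf M)
            { toFun := fun w => ⟨g.hom w, by
                have h1 : cornEl hf f • w = w := by
                  rw [show cornEl hf f = 1 from cornEl_val hf 1, one_smul]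
                exact (map_smul g.hom f (show (inflation hf h).obj W from w)).symm.trans
                  (congrArg g.hom h1)⟩
              map_add' := fun x y => Subtype.ext (map_add g.hom x y)
              map_smul' := fun c x => Subtype.ext (by
                have h1 : c • x = cornEl hf c.1 • x := by rw [cornEl_val]
                exact (congrArg g.hom h1).trans
                  (map_smul g.hom c.1 (show (inflation hf h).obj W from x))) }
          invFun := fun g => ModuleCat.ofHom (X := (inflation hf h).obj W) (Y := M)
            { toFun := fun w => (g.hom (show W from w)).1
              map_add' := fun x y => congrArg Subtype.val (map_add g.hom (show W from x) y)
              map_smul' := fun a x => by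
                refine (congrArg Subtype.val
                  (map_smul g.hom (cornEl hf a) (show W from x))).trans ?_
                change (f * a * f) • (g.hom (show W from x)).1 = a • (g.hom (show W from x)).1
                rw [f_mul_mul_f h, mul_smul]
                exact congrArg (a • ·) (g.hom (show W from x)).2 }
          left_inv := fun g => rfl
          right_inv := fun g => rfl }
      homEquiv_naturality_left_symm := fun _ _ => rfl
      homEquiv_naturality_right := fun _ _ => rfl }

/-- If `(1 - f) V = 0`, then `V` is the inflation of `fV = V`. -/
noncomputable def inflationCornerIso (h : ∀ a : A, (1 - f) * a * f = 0) (V : Type) [AddCommGroup V]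
    [Module A V] (hV : ∀ v : V, (1 - f) • v = 0) :
    (inflation hf h).obj (ModuleCat.of (Corner f hf) (CornerMod f hf V)) ≅ ModuleCat.of A V :=
  have hV' (v : V) : f • v = v := by
    have h1 := hV v
    rw [sub_smul, one_smul, sub_eq_zero] at h1
    exact h1.symm
  let e : (inflation hf h).obj (ModuleCat.of (Corner f hf) (CornerMod f hf V)) ≃ₗ[A]
      ModuleCat.of A V :=
    { toFun := fun v => (show CornerMod f hf V from v).1
      invFun := fun v => (⟨v, hV' v⟩ : CornerMod f hf V)
      left_inv := fun v => rfl
      right_inv := fun v => rfl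
      map_add' := fun x y => rfl
      map_smul' := fun a x => by
        change (f * a * f) • (show CornerMod f hf V from x).1 =
          a • (show CornerMod f hf V from x).1
        rw [f_mul_mul_f h, mul_smul, hV'] }
  e.toModuleIso

end CornerAdjunction

/-- Let `f` be an idempotent of a finite-dimensional algebra `A` with
`(1−f) A f = 0`, and let `V, V'` be finitely generated left `A`-modules with `(1−f) • V = 0`.
Then for every `m ≥ 0` there is a `k`-linear isomorphism
`Ext^m_A(V, V') ≅ Ext^m_{fAf}(fV, fV')`. -/
theorem statement11
    (k : Type) [Field k] (A : Type) [Ring A] [Algebra k A] [FiniteDimensional k A]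
    (f : A) (hf : f * f = f) (h : ∀ a : A, (1 - f) * a * f = 0)
    (V V' : Type) [AddCommGroup V] [Module A V] [AddCommGroup V'] [Module A V']
    [Module.Finite A V] [Module.Finite A V']
    (hV : ∀ v : V, (1 - f) • v = 0) (m : ℕ) :
    Nonempty (
      ((((Ext k (ModuleCat A) m).obj (Opposite.op (ModuleCat.of A V))).obj
          (ModuleCat.of A V')) : Type) ≃ₗ[k]
      ((((Ext k (ModuleCat (Corner f hf)) m).obj
            (Opposite.op (ModuleCat.of (Corner f hf) (CornerMod f hf V)))).obj
          (ModuleCat.of (Corner f hf) (CornerMod f hf V'))) : Type)) := by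
  let adj := inflationAdjunction hf h
  -- Inflation is exact: it is a left adjoint and preserves injections.
  have : (inflation hf h).IsLeftAdjoint := adj.isLeftAdjoint
  have : (inflation hf h).Additive := { map_add := rfl }
  have : (inflation hf h).PreservesHomology :=
    CategoryTheory.Functor.preservesHomology_of_preservesMonos_and_cokernels _
  have : (inflation hf h).PreservesProjectiveObjects :=
    { projective_obj := fun {P} hP => adj.map_projective P hP }
  obtain ⟨e⟩ := nonempty_ext_iso_of_adjunction (k := k) adj
    (ModuleCat.of (Corner f hf) (CornerMod f hf V)) (ModuleCat.of A V') m
  exact ⟨((((Ext k (ModuleCat A) m).mapIso (inflationCornerIso hf h V hV).op).app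
    (ModuleCat.of A V')) ≪≫ e).toLinearEquiv⟩
end
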